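/- arXiv:2408.02459 — 2 statements merged into one kernel-verified Lean document; each statement's English description precedes it below -/
import Mathlib

section
/- Let Z be a standard Borel space with a Markov transition kernel P and a P-stationary probability measure μ (i.e. ∫ P(z,·) μ(dz) = μ). Let d ≥ 1 and let A : Z → SL(d,ℝ) be measurable; for M ∈ SL(d,ℝ) let M act on the unit sphere S^{d−1} ⊆ ℝ^d by v ↦ Mv/|Mv|, and let M_*σ denote the pushforward of a measure σ on S^{d−1} under this map. Suppose ν : Z → 𝒫(S^{d−1}) is a measurable family of probability measures on S^{d−1} satisfying the twisted pullback condition ν_z = (A(z)^{−1})_* ( ∫ ν_y P(z, dy) ) for every z ∈ Z. Define λ⁺ := lim_{n→∞} (1/n) ∫ ⋯ ∫ log‖A(z_{n−1}) ⋯ A(z₁) A(z₀)‖ P(z_{n−2}, dz_{n−1}) ⋯ P(z₀, dz₁) μ(dz₀), where ‖·‖ is the operator norm (note log‖·‖ ≥ 0 on SL(d,ℝ), so these integrals are well defined in [0,∞]). If this limit exists and equals 0, then the family is almost surely invariant: A(z₀)_* ν_{z₀} = ν_{z₁} for P(z₀, dz₁) μ(dz₀)-almost every pair (z₀, z₁)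 ∈ Z × Z. -/
open MeasureTheory ProbabilityTheory Filter
open scoped ENNReal

/-- The projective action of a `d × d` real matrix on the unit sphere of `ℝ^d`:
`v ↦ Mv/|Mv|` (extended arbitrarily where `Mv = 0`; for invertible `M` this never occurs). -/
noncomputable def projAct {d : ℕ} (M : Matrix (Fin d) (Fin d) ℝ)
    (v : Metric.sphere (0 : EuclideanSpace ℝ (Fin d)) 1) :
    Metric.sphere (0 : EuclideanSpace ℝ (Fin d)) 1 := by
  haveI := Classical.propDecidable
  exact if h : Matrix.toEuclideanLin M (v : EuclideanSpace ℝ (Fin d)) = 0 then v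
  else
    ⟨‖Matrix.toEuclideanLin M (v : EuclideanSpace ℝ (Fin d))‖⁻¹ •
        Matrix.toEuclideanLin M (v : EuclideanSpace ℝ (Fin d)),
      by rw [mem_sphere_zero_iff_norm]; exact norm_smul_inv_norm h⟩

/-- The operator norm of a `d × d` real matrix acting on Euclidean space. -/
noncomputable def matOpNorm {d : ℕ} (M : Matrix (Fin d) (Fin d) ℝ) : ℝ :=
  ‖LinearMap.toContinuousLinearMap (Matrix.toEuclideanLin M)‖


namespace MF

instance instMSMat (d : ℕ) : MeasurableSpace (Matrix (Fin d) (Fin d) ℝ) :=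
  inferInstanceAs (MeasurableSpace (Fin d → Fin d → ℝ))

instance instBorelMat (d : ℕ) : BorelSpace (Matrix (Fin d) (Fin d) ℝ) :=
  inferInstanceAs (BorelSpace (Fin d → Fin d → ℝ))

instance instSCMat (d : ℕ) : SecondCountableTopology (Matrix (Fin d) (Fin d) ℝ) :=
  inferInstanceAs (SecondCountableTopology (Fin d → Fin d → ℝ))

/-- sphere -/
abbrev Sph (d : ℕ) := Metric.sphere (0 : EuclideanSpace ℝ (Fin d)) 1

/-- matrices -/
abbrev Mat (d : ℕ) := Matrix (Fin d) (Fin d) ℝ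

lemma measurable_mat_iff {d : ℕ} {α : Type*} [MeasurableSpace α] {f : α → Mat d} :
    Measurable f ↔ ∀ i j, Measurable fun a => f a i j := by
  constructor
  · intro h i j
    have h1 : Measurable (fun a => (f a : Fin d → Fin d → ℝ)) := h
    exact (measurable_pi_iff.1 ((measurable_pi_iff.1 h1) i)) j
  · intro h
    have h1 : Measurable (fun a => (f a : Fin d → Fin d → ℝ)) :=
      measurable_pi_iff.2 fun i => measurable_pi_iff.2 fun j => h i j
    exact h1

lemma lin_coord {d : ℕ} (M : Mat d) (x : EuclideanSpace ℝ (Fin d)) (i : Fin d) :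
    (Matrix.toEuclideanLin M x) i = ∑ j, M i j * x j := by
  simp [Matrix.toEuclideanLin, Matrix.mulVec, dotProduct]

lemma cont_lin {d : ℕ} : Continuous
    (fun p : Mat d × EuclideanSpace ℝ (Fin d) => Matrix.toEuclideanLin p.1 p.2) := by
  have h : Continuous (fun p : Mat d × EuclideanSpace ℝ (Fin d) =>
      (WithLp.toLp 2 (fun i => ∑ j, p.1 i j * p.2 j) : EuclideanSpace ℝ (Fin d))) := by
    refine (PiLp.continuous_toLp 2 _).comp ?_
    fun_prop
  convert h using 1
  funext p
  ext i
  exact lin_coord _ _ _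

lemma meas_lin {d : ℕ} : Measurable
    (fun p : Mat d × EuclideanSpace ℝ (Fin d) => Matrix.toEuclideanLin p.1 p.2) :=
  cont_lin.measurable

lemma lin_mul {d : ℕ} (M N : Mat d) (x : EuclideanSpace ℝ (Fin d)) :
    Matrix.toEuclideanLin (M * N) x = Matrix.toEuclideanLin M (Matrix.toEuclideanLin N x) := by
  ext i
  simp [Matrix.toEuclideanLin]

lemma lin_one {d : ℕ} (x : EuclideanSpace ℝ (Fin d)) :
    Matrix.toEuclideanLin (1 : Mat d) x = x := by
  ext i
  simp [Matrix.toEuclideanLin]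

lemma lin_ne {d : ℕ} {M : Mat d} (hM : M.det = 1) {x : EuclideanSpace ℝ (Fin d)} (hx : x ≠ 0) :
    Matrix.toEuclideanLin M x ≠ 0 := by
  intro h
  have h1 : Matrix.toEuclideanLin (M.adjugate * M) x = x := by
    rw [Matrix.adjugate_mul, hM, one_smul, lin_one]
  rw [lin_mul, h, map_zero] at h1
  exact hx h1.symm

lemma sph_ne {d : ℕ} (x : Sph d) : (x : EuclideanSpace ℝ (Fin d)) ≠ 0 := by
  intro h
  have := x.2
  rw [mem_sphere_zero_iff_norm, h, norm_zero] at this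
  exact zero_ne_one this

lemma sph_norm {d : ℕ} (x : Sph d) : ‖(x : EuclideanSpace ℝ (Fin d))‖ = 1 :=
  mem_sphere_zero_iff_norm.1 x.2

lemma proj_coe {d : ℕ} {M : Mat d} (hM : M.det = 1) (x : Sph d) :
    (projAct M x : EuclideanSpace ℝ (Fin d)) =
      ‖Matrix.toEuclideanLin M (x : EuclideanSpace ℝ (Fin d))‖⁻¹ •
        Matrix.toEuclideanLin M (x : EuclideanSpace ℝ (Fin d)) := by
  unfold projAct
  split_ifs with h
  · exact absurd h (lin_ne hM (sph_ne x))
  · rfl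

lemma proj_one {d : ℕ} (x : Sph d) : projAct (1 : Mat d) x = x := by
  apply Subtype.ext
  rw [proj_coe Matrix.det_one, lin_one, sph_norm]; simp

lemma proj_mul {d : ℕ} {M N : Mat d} (hM : M.det = 1) (hN : N.det = 1) (x : Sph d) :
    projAct (M * N) x = projAct M (projAct N x) := by
  apply Subtype.ext
  have hMN : (M * N).det = 1 := by rw [Matrix.det_mul, hM, hN, one_mul]
  rw [proj_coe hMN, proj_coe hM, proj_coe hN, lin_mul, map_smul, norm_smul, smul_smul]
  have h : ‖Matrix.toEuclideanLin N (x : EuclideanSpace ℝ (Fin d))‖ ≠ 0 :=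
    norm_ne_zero_iff.2 (lin_ne hN (sph_ne x))
  congr 1
  rw [norm_inv, norm_norm]
  field_simp

lemma det_adj {d : ℕ} {M : Mat d} (hM : M.det = 1) : M.adjugate.det = 1 := by
  rw [Matrix.det_adjugate, hM, one_pow]

lemma inv_eq_adj {d : ℕ} {M : Mat d} (hM : M.det = 1) : M⁻¹ = M.adjugate := by
  rw [Matrix.inv_def, hM]; simp

lemma proj_adj {d : ℕ} {M : Mat d} (hM : M.det = 1) (x : Sph d) :
    projAct M (projAct M.adjugate x) = x := by
  rw [← proj_mul hM (det_adj hM), Matrix.mul_adjugate, hM, one_smul, proj_one]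

lemma meas_proj {d : ℕ} : Measurable (fun p : Mat d × Sph d => projAct p.1 p.2) := by
  classical
  have hc : Measurable (fun p : Mat d × Sph d =>
      Matrix.toEuclideanLin p.1 (p.2 : EuclideanSpace ℝ (Fin d))) :=
    Measurable.comp (g := fun p : Mat d × EuclideanSpace ℝ (Fin d) => Matrix.toEuclideanLin p.1 p.2)
      (f := fun p : Mat d × Sph d => (p.1, (p.2 : EuclideanSpace ℝ (Fin d)))) meas_lin
      (measurable_fst.prodMk (measurable_subtype_coe.comp measurable_snd))
  rw [← (MeasurableEmbedding.subtype_coe (Metric.isClosed_sphere.measurableSet)).measurable_comp_iff]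
  have : ((Subtype.val : Sph d → EuclideanSpace ℝ (Fin d)) ∘
      fun p : Mat d × Sph d => projAct p.1 p.2) = fun p =>
      if Matrix.toEuclideanLin p.1 (p.2 : EuclideanSpace ℝ (Fin d)) = 0 then
        (p.2 : EuclideanSpace ℝ (Fin d)) else
        ‖Matrix.toEuclideanLin p.1 (p.2 : EuclideanSpace ℝ (Fin d))‖⁻¹ •
        Matrix.toEuclideanLin p.1 (p.2 : EuclideanSpace ℝ (Fin d)) := by
    funext p
    simp only [Function.comp_apply, projAct]
    split_ifs <;> first | rfl | contradiction
  rw [this]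
  refine Measurable.ite (hc (measurableSet_singleton 0)) (measurable_subtype_coe.comp measurable_snd) ?_
  exact (hc.norm.inv).smul hc

lemma meas_proj_left {d : ℕ} (M : Mat d) : Measurable (projAct M) :=
  Measurable.comp (g := fun p : Mat d × Sph d => projAct p.1 p.2)
    (f := fun x : Sph d => (M, x)) meas_proj (measurable_const.prodMk measurable_id)

/-- the linear map to operators -/
noncomputable def toCLM (d : ℕ) :
    Mat d →ₗ[ℝ] (EuclideanSpace ℝ (Fin d) →L[ℝ] EuclideanSpace ℝ (Fin d)) where
  toFun M := LinearMap.toContinuousLinearMap (Matrix.toEuclideanLin M)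
  map_add' a b := by rw [map_add, map_add]
  map_smul' a b := by rw [map_smul, map_smul]; rfl

lemma meas_opNorm {d : ℕ} : Measurable (fun M : Mat d => matOpNorm M) := by
  have h : Continuous (toCLM d) := LinearMap.continuous_of_finiteDimensional _
  have h2 : Continuous (fun M : Mat d => ‖toCLM d M‖) := continuous_norm.comp h
  exact h2.measurable

lemma lin_le {d : ℕ} (M : Mat d) (x : EuclideanSpace ℝ (Fin d)) :
    ‖Matrix.toEuclideanLin M x‖ ≤ matOpNorm M * ‖x‖ :=
  (LinearMap.toContinuousLinearMap (Matrix.toEuclideanLin M)).le_opNorm x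

lemma norm_le_sum {d : ℕ} (x : EuclideanSpace ℝ (Fin d)) : ‖x‖ ≤ ∑ i, |x i| := by
  rw [EuclideanSpace.norm_eq]
  apply Real.sqrt_le_iff.2
  refine ⟨Finset.sum_nonneg fun i _ => abs_nonneg _, ?_⟩
  have := Finset.sum_sq_le_sq_sum_of_nonneg (s := Finset.univ) (f := fun i => |x i|) (fun i _ => abs_nonneg _)
  simpa using this

lemma coord_le {d : ℕ} (x : EuclideanSpace ℝ (Fin d)) (i : Fin d) : |x i| ≤ ‖x‖ := by
  simpa using PiLp.norm_apply_le x i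

lemma entry_le {d : ℕ} (M : Mat d) (i j : Fin d) : |M i j| ≤ matOpNorm M := by
  have h := lin_le M (EuclideanSpace.single j 1)
  have h2 := coord_le (Matrix.toEuclideanLin M (EuclideanSpace.single j 1)) i
  rw [lin_coord] at h2
  simp at h2 h
  exact h2.trans h

lemma lin_le_of_entry {d : ℕ} (M : Mat d) {b : ℝ} (hb : ∀ i j, |M i j| ≤ b)
    (x : EuclideanSpace ℝ (Fin d)) :
    ‖Matrix.toEuclideanLin M x‖ ≤ d * (d * (b * ‖x‖)) := by
  refine (norm_le_sum _).trans ?_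
  have : ∀ i, |Matrix.toEuclideanLin M x i| ≤ d * (b * ‖x‖) := by
    intro i
    rw [lin_coord]
    refine (Finset.abs_sum_le_sum_abs _ _).trans ?_
    refine (Finset.sum_le_card_nsmul _ _ (b * ‖x‖) ?_).trans (by simp)
    intro j _
    rw [abs_mul]
    exact mul_le_mul (hb i j) (coord_le x j) (abs_nonneg _) ((abs_nonneg _).trans (hb i j))
  exact (Finset.sum_le_card_nsmul _ _ _ (fun i _ => this i)).trans (by simp)

lemma adj_entry_le {d : ℕ} (M : Mat d) {R : ℝ} (hR : 1 ≤ R) (hM : matOpNorm M ≤ R) (i j : Fin d) :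
    |M.adjugate i j| ≤ d.factorial * R ^ d := by
  rw [Matrix.adjugate_apply]
  have := Matrix.det_le (A := M.updateRow j (Pi.single i 1)) (abv := AbsoluteValue.abs) (x := R) ?_
  · simpa using this
  · intro k l
    by_cases hk : k = j
    · subst hk
      rw [Matrix.updateRow_self]
      by_cases hl : l = i
      · subst hl; simpa using hR
      · simp [hl]; linarith
    · rw [Matrix.updateRow_ne hk]
      exact (entry_le M k l).trans hM

/-- Lipschitz constant of the action -/
noncomputable def CL (d : ℕ) : ℝ := 2 * (d * (d * d.factorial))

lemma CL_nonneg (d : ℕ) : 0 ≤ CL d := by unfold CL; positivity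

lemma norm_normalize_sub {E : Type*} [NormedAddCommGroup E] [NormedSpace ℝ E] {a b : E}
    (ha : a ≠ 0) (hb : b ≠ 0) :
    ‖‖a‖⁻¹ • a - ‖b‖⁻¹ • b‖ ≤ 2 * ‖a‖⁻¹ * ‖a - b‖ := by
  have h1 : ‖a‖⁻¹ • a - ‖b‖⁻¹ • b = ‖a‖⁻¹ • (a - b) + (‖a‖⁻¹ - ‖b‖⁻¹) • b := by
    rw [smul_sub, sub_smul]; abel
  have ha' : 0 < ‖a‖ := norm_pos_iff.2 ha
  have hb' : 0 < ‖b‖ := norm_pos_iff.2 hb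
  rw [h1]
  refine (norm_add_le _ _).trans ?_
  rw [norm_smul, norm_smul, norm_inv, norm_norm]
  have h2 : ‖‖a‖⁻¹ - ‖b‖⁻¹‖ * ‖b‖ = ‖a‖⁻¹ * |‖b‖ - ‖a‖| := by
    rw [Real.norm_eq_abs, ← abs_of_pos hb', ← abs_mul, abs_of_pos hb']
    have : (‖a‖⁻¹ - ‖b‖⁻¹) * ‖b‖ = ‖a‖⁻¹ * (‖b‖ - ‖a‖) := by field_simp
    rw [this, abs_mul, abs_of_pos (inv_pos.2 ha')]
  rw [h2]
  have h3 : |‖b‖ - ‖a‖| ≤ ‖a - b‖ := by rw [abs_sub_comm]; exact abs_norm_sub_norm_le a b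
  have := mul_le_mul_of_nonneg_left h3 (inv_pos.2 ha').le
  linarith

lemma proj_lip {d : ℕ} {M : Mat d} (hdet : M.det = 1) {R : ℝ} (hR : 1 ≤ R) (hM : matOpNorm M ≤ R)
    (x y : Sph d) : dist (projAct M x) (projAct M y) ≤ CL d * R ^ (d + 1) * dist x y := by
  rw [Subtype.dist_eq, Subtype.dist_eq, dist_eq_norm, dist_eq_norm, proj_coe hdet, proj_coe hdet]
  refine (norm_normalize_sub (lin_ne hdet (sph_ne x)) (lin_ne hdet (sph_ne y))).trans ?_
  rw [← map_sub]
  have h1 := lin_le M ((x : EuclideanSpace ℝ (Fin d)) - y)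
  have h2 : ‖Matrix.toEuclideanLin M (x : EuclideanSpace ℝ (Fin d))‖⁻¹ ≤
      d * (d * (d.factorial * R ^ d)) := by
    have h3 := lin_le_of_entry M.adjugate (adj_entry_le M hR hM)
      (Matrix.toEuclideanLin M (x : EuclideanSpace ℝ (Fin d)))
    rw [← lin_mul, Matrix.adjugate_mul, hdet, one_smul, lin_one, sph_norm] at h3
    have h4 : 0 < ‖Matrix.toEuclideanLin M (x : EuclideanSpace ℝ (Fin d))‖ :=
      norm_pos_iff.2 (lin_ne hdet (sph_ne x))
    rw [inv_eq_one_div, div_le_iff₀ h4]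
    linarith
  have h5 : ‖Matrix.toEuclideanLin M ((x : EuclideanSpace ℝ (Fin d)) - y)‖ ≤
      R * ‖(x : EuclideanSpace ℝ (Fin d)) - y‖ :=
    h1.trans (mul_le_mul_of_nonneg_right hM (norm_nonneg _))
  have h6 := mul_le_mul h2 h5 (norm_nonneg _) (by positivity)
  unfold CL
  rw [pow_succ]
  linarith

/-- cell map -/
noncomputable def cell (d m : ℕ) (x : Sph d) : Fin d → Fin (2 * m + 1) :=
  fun i => Fin.ofNat (2 * m + 1) ⌊(m : ℝ) * ((x : EuclideanSpace ℝ (Fin d)) i + 1)⌋₊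

lemma meas_cell (d m : ℕ) : Measurable (cell d m) := by
  refine measurable_pi_iff.2 fun i => ?_
  have h1 : Measurable fun x : Sph d => (m : ℝ) * ((x : EuclideanSpace ℝ (Fin d)) i + 1) := by
    have : Continuous fun x : Sph d => (m : ℝ) * ((x : EuclideanSpace ℝ (Fin d)) i + 1) := by
      fun_prop
    exact this.measurable
  exact (measurable_from_top (f := fun n : ℕ => Fin.ofNat (2 * m + 1) n)).comp
    (Nat.measurable_floor.comp h1)

lemma cell_dist {d m : ℕ} (hm : 0 < m) {x y : Sph d} (h : cell d m x = cell d m y) :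
    dist x y ≤ d / m := by
  rw [Subtype.dist_eq, dist_eq_norm]
  refine (norm_le_sum _).trans ?_
  have hm' : (0 : ℝ) < m := by exact_mod_cast hm
  have hb : ∀ (z : Sph d) i, 0 ≤ (m : ℝ) * ((z : EuclideanSpace ℝ (Fin d)) i + 1) ∧
      (m : ℝ) * ((z : EuclideanSpace ℝ (Fin d)) i + 1) ≤ (2 * m : ℕ) := by
    intro z i
    have := coord_le (z : EuclideanSpace ℝ (Fin d)) i
    rw [sph_norm, abs_le] at this
    constructor
    · apply mul_nonneg hm'.le; linarith
    · push_cast; nlinarith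
  have key : ∀ i, |((x : EuclideanSpace ℝ (Fin d)) - y) i| ≤ 1 / m := by
    intro i
    have h1 := congrArg Fin.val (congrFun h i)
    simp only [cell, Fin.ofNat] at h1
    have hx := hb x i
    have hy := hb y i
    have hfx := Nat.floor_le_of_le hx.2
    have hfy := Nat.floor_le_of_le hy.2
    rw [Nat.mod_eq_of_lt (by omega), Nat.mod_eq_of_lt (by omega)] at h1
    have a1 := Nat.floor_le hx.1
    have a2 := Nat.lt_floor_add_one ((m : ℝ) * ((x : EuclideanSpace ℝ (Fin d)) i + 1))
    have b1 := Nat.floor_le hy.1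
    have b2 := Nat.lt_floor_add_one ((m : ℝ) * ((y : EuclideanSpace ℝ (Fin d)) i + 1))
    rw [h1] at a1 a2
    rw [le_div_iff₀ hm', PiLp.sub_apply]
    rw [show ∀ a : ℝ, |a| * (m : ℝ) = |a * m| from fun a => by rw [abs_mul, abs_of_pos hm'], abs_le]
    constructor <;> linarith
  refine (Finset.sum_le_card_nsmul _ _ _ (fun i _ => key i)).trans (by simp [div_eq_mul_inv])

end MF

namespace MF

lemma scalar_ineq {p q t : ℝ} (hp : 0 < p) (hq : 0 < q) (ht : 0 ≤ t) :
    (1 + Real.log q) * (p - q) + 2 * t * |p - q| - 2 * t ^ 2 * (p + q) ≤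
      p * Real.log p - q * Real.log q := by
  obtain ⟨a, ha, rfl⟩ : ∃ a, 0 < a ∧ p = a ^ 2 :=
    ⟨√p, Real.sqrt_pos.2 hp, (Real.sq_sqrt hp.le).symm⟩
  obtain ⟨b, hb, rfl⟩ : ∃ a, 0 < a ∧ q = a ^ 2 :=
    ⟨√q, Real.sqrt_pos.2 hq, (Real.sq_sqrt hq.le).symm⟩
  have h1 : Real.log (b / a) ≤ b / a - 1 := Real.log_le_sub_one_of_pos (by positivity)
  rw [Real.log_div hb.ne' ha.ne'] at h1
  have h2 : a ^ 2 * (Real.log b - Real.log a) ≤ a * b - a ^ 2 := by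
    have := mul_le_mul_of_nonneg_left h1 (by positivity : 0 ≤ a ^ 2)
    have e : a ^ 2 * (b / a - 1) = a * b - a ^ 2 := by field_simp
    linarith
  have h3 : |a ^ 2 - b ^ 2| = |a - b| * (a + b) := by
    rw [sq_sub_sq, abs_mul, abs_of_pos (by positivity : 0 < a + b), mul_comm]
  rw [h3, Real.log_pow, Real.log_pow]
  push_cast
  have h4 := sq_nonneg (|a - b| - t * (a + b))
  have h5 : |a - b| ^ 2 = (a - b) ^ 2 := sq_abs _
  have h6 : t ^ 2 * (a + b) ^ 2 ≤ t ^ 2 * (2 * (a ^ 2 + b ^ 2)) := by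
    apply mul_le_mul_of_nonneg_left _ (sq_nonneg t)
    nlinarith [sq_nonneg (a - b)]
  nlinarith

/-- entropy -/
noncomputable def Fent {ι : Type*} [Fintype ι] (w : ι → ℝ) : ℝ :=
  ∑ i, (w i + 1 / Fintype.card ι) * Real.log (w i + 1 / Fintype.card ι)

lemma sum_shift {ι : Type*} [Fintype ι] [Nonempty ι] {w : ι → ℝ} (hs : ∑ i, w i = 1) :
    ∑ i, (w i + 1 / Fintype.card ι : ℝ) = 2 := by
  rw [Finset.sum_add_distrib, hs]
  simp
  norm_num

lemma Fent_ineq {ι : Type*} [Fintype ι] [Nonempty ι] {w w' : ι → ℝ} (h0 : ∀ i, 0 ≤ w i)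
    (h0' : ∀ i, 0 ≤ w' i) (hs : ∑ i, w i = 1) (hs' : ∑ i, w' i = 1) {t : ℝ} (ht : 0 ≤ t) :
    ∑ i, (1 + Real.log (w i + 1 / Fintype.card ι)) * (w' i - w i) +
      2 * t * ∑ i, |w' i - w i| - 8 * t ^ 2 ≤ Fent w' - Fent w := by
  have hN : (0 : ℝ) < 1 / Fintype.card ι := by
    have := Fintype.card_pos (α := ι); positivity
  have e : 8 * t ^ 2 = 2 * t ^ 2 * ∑ i, ((w' i + 1 / Fintype.card ι : ℝ) + (w i + 1 / Fintype.card ι)) := by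
    rw [Finset.sum_add_distrib, sum_shift hs, sum_shift hs']; ring
  rw [e, Finset.mul_sum, Finset.mul_sum, ← Finset.sum_add_distrib, ← Finset.sum_sub_distrib]
  unfold Fent
  rw [← Finset.sum_sub_distrib]
  refine Finset.sum_le_sum fun i _ => ?_
  have := scalar_ineq (p := w' i + 1 / Fintype.card ι) (q := w i + 1 / Fintype.card ι)
    (by linarith [h0' i]) (by linarith [h0 i]) ht
  simpa using this

lemma Fent_bounds {ι : Type*} [Fintype ι] [Nonempty ι] {w : ι → ℝ} (h0 : ∀ i, 0 ≤ w i)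
    (hs : ∑ i, w i = 1) :
    -(2 * Real.log (Fintype.card ι)) ≤ Fent w ∧ Fent w ≤ 2 * Real.log 2 := by
  have hc : (1 : ℝ) ≤ Fintype.card ι := by exact_mod_cast Fintype.card_pos (α := ι)
  have hN : (0 : ℝ) < 1 / Fintype.card ι := by positivity
  have hN1 : (1 : ℝ) / Fintype.card ι ≤ 1 := by rw [div_le_one (by linarith)]; exact hc
  have h1 : ∀ i, w i ≤ 1 := fun i => by
    rw [← hs]; exact Finset.single_le_sum (fun j _ => h0 j) (Finset.mem_univ i)
  unfold Fent
  constructor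
  · have e : -(2 * Real.log (Fintype.card ι)) =
        ∑ i, (w i + 1 / Fintype.card ι) * (-Real.log (Fintype.card ι)) := by
      rw [← Finset.sum_mul, sum_shift hs]; ring
    rw [e]
    refine Finset.sum_le_sum fun i _ => ?_
    refine mul_le_mul_of_nonneg_left ?_ (by linarith [h0 i])
    rw [← Real.log_inv, ← one_div]
    exact Real.log_le_log hN (by linarith [h0 i])
  · have e : 2 * Real.log 2 =
        ∑ i, (w i + 1 / Fintype.card ι) * Real.log 2 := by
      rw [← Finset.sum_mul, sum_shift hs]
    rw [e]
    refine Finset.sum_le_sum fun i _ => ?_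
    refine mul_le_mul_of_nonneg_left ?_ (by linarith [h0 i])
    exact Real.log_le_log (by linarith [h0 i]) (by linarith [h1 i])

lemma sum_cells {S ι : Type*} [MeasurableSpace S] [Fintype ι] [MeasurableSpace ι]
    [MeasurableSingletonClass ι] (W : Measure S) [IsProbabilityMeasure W] {c : S → ι}
    (hc : Measurable c) (h : ι → ℝ) :
    ∫ x, h (c x) ∂W = ∑ i, h i * W.real (c ⁻¹' {i}) := by
  have hm : Measurable h := measurable_of_finite h
  rw [← integral_map (φ := c) (f := h) hc.aemeasurable hm.aestronglyMeasurable]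
  haveI : IsProbabilityMeasure (W.map c) := Measure.isProbabilityMeasure_map hc.aemeasurable
  rw [integral_fintype (Integrable.of_finite)]
  refine Finset.sum_congr rfl fun i _ => ?_
  rw [smul_eq_mul, mul_comm, map_measureReal_apply hc (measurableSet_singleton i)]

lemma sum_cells_one {S ι : Type*} [MeasurableSpace S] [Fintype ι] [MeasurableSpace ι]
    [MeasurableSingletonClass ι] (W : Measure S) [IsProbabilityMeasure W] {c : S → ι}
    (hc : Measurable c) : ∑ i, W.real (c ⁻¹' {i}) = 1 := by
  have := sum_cells W hc (fun _ => 1)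
  simpa using this.symm

lemma integrable_bdd {S : Type*} [MeasurableSpace S] (W : Measure S) [IsFiniteMeasure W]
    {f : S → ℝ} (hf : Measurable f) (C : ℝ) (hb : ∀ x, |f x| ≤ C) : Integrable f W :=
  Integrable.of_bound hf.aestronglyMeasurable C (Eventually.of_forall hb)

lemma test_bound {S ι : Type*} [MeasurableSpace S] [Fintype ι] [MeasurableSpace ι]
    [MeasurableSingletonClass ι] (W W' : Measure S) [IsProbabilityMeasure W]
    [IsProbabilityMeasure W'] {c : S → ι} (hc : Measurable c) {ψ : S → ℝ} (hψ : Measurable ψ)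
    (hb : ∀ x, |ψ x| ≤ 1) {η : ℝ} (hosc : ∀ x y, c x = c y → |ψ x - ψ y| ≤ η) :
    |∫ x, ψ x ∂W' - ∫ x, ψ x ∂W| ≤
      ∑ i, |W'.real (c ⁻¹' {i}) - W.real (c ⁻¹' {i})| + 2 * η := by
  classical
  obtain ⟨h, hh1, hh2⟩ : ∃ h : ι → ℝ, (∀ i, |h i| ≤ 1) ∧ ∀ x, |ψ x - h (c x)| ≤ η := by
    refine ⟨fun i => if hi : ∃ x, c x = i then ψ hi.choose else 0, fun i => ?_, fun x => ?_⟩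
    · dsimp only
      split_ifs
      · exact hb _
      · simp
    · dsimp only
      have hi : ∃ y, c y = c x := ⟨x, rfl⟩
      rw [dif_pos hi]
      exact hosc _ _ hi.choose_spec.symm
  have hm : Measurable (fun x => h (c x)) := (measurable_of_finite h).comp hc
  have key : ∀ V : Measure S, IsProbabilityMeasure V → |∫ x, ψ x ∂V - ∫ x, h (c x) ∂V| ≤ η := by
    intro V _
    rw [← integral_sub (integrable_bdd V hψ 1 hb) (integrable_bdd V hm 1 fun x => hh1 _)]
    have := norm_integral_le_of_norm_le_const (μ := V) (f := fun x => ψ x - h (c x)) (C := η)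
      (Eventually.of_forall hh2)
    simpa using this
  have k1 := key W inferInstance
  have k2 := key W' inferInstance
  have k3 : |∫ x, h (c x) ∂W' - ∫ x, h (c x) ∂W| ≤
      ∑ i, |W'.real (c ⁻¹' {i}) - W.real (c ⁻¹' {i})| := by
    rw [sum_cells W hc, sum_cells W' hc, ← Finset.sum_sub_distrib]
    refine (Finset.abs_sum_le_sum_abs _ _).trans (Finset.sum_le_sum fun i _ => ?_)
    rw [← mul_sub, abs_mul]
    exact mul_le_of_le_one_left (abs_nonneg _) (hh1 i)
  rw [abs_le] at *
  constructor <;> linarith [k1.1, k1.2, k2.1, k2.2, k3.1, k3.2]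

lemma test_triv {S : Type*} [MeasurableSpace S]
    (W W' : Measure S) [IsProbabilityMeasure W]
    [IsProbabilityMeasure W'] {ψ : S → ℝ} 
    (hb : ∀ x, |ψ x| ≤ 1) :
    |∫ x, ψ x ∂W' - ∫ x, ψ x ∂W| ≤ 2 := by
  have key : ∀ V : Measure S, IsProbabilityMeasure V → |∫ x, ψ x ∂V| ≤ 1 := by
    intro V _
    have := norm_integral_le_of_norm_le_const (μ := V) (f := ψ) (C := 1)
      (Eventually.of_forall hb)
    simpa using this
  have k1 := key W inferInstance
  have k2 := key W' inferInstance
  rw [abs_le] at *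
  constructor <;> linarith [k1.1, k1.2, k2.1, k2.2]

end MF

namespace MF

/-- pulled back measure -/
noncomputable def Wm {Z : Type} {d : ℕ} [MeasurableSpace Z] (ν : Z → Measure (Sph d)) (p : Mat d × Z) :
    Measure (Sph d) :=
  (ν p.2).map (projAct p.1.adjugate)

lemma Wm_prob {Z : Type} {d : ℕ} [MeasurableSpace Z] {ν : Z → Measure (Sph d)}
    (hp : ∀ z, IsProbabilityMeasure (ν z)) (p : Mat d × Z) : IsProbabilityMeasure (Wm ν p) :=
  haveI := hp p.2
  Measure.isProbabilityMeasure_map (meas_proj_left _).aemeasurable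

lemma meas_adj {d : ℕ} : Measurable (fun M : Mat d => M.adjugate) :=
  (Continuous.matrix_adjugate continuous_id).measurable

lemma meas_proj_adj {Z : Type} {d : ℕ} [MeasurableSpace Z] :
    Measurable (fun q : (Mat d × Z) × Sph d => projAct q.1.1.adjugate q.2) :=
  Measurable.comp (g := fun p : Mat d × Sph d => projAct p.1 p.2)
    (f := fun q : (Mat d × Z) × Sph d => (q.1.1.adjugate, q.2)) meas_proj
    ((Measurable.comp (g := fun M : Mat d => M.adjugate) (f := fun q : (Mat d × Z) × Sph d => q.1.1)
      meas_adj (measurable_fst.comp measurable_fst)).prodMk measurable_snd)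

lemma meas_Wm {Z : Type} {d : ℕ} [MeasurableSpace Z] {ν : Z → Measure (Sph d)}
    (hν : Measurable ν) (hp : ∀ z, IsProbabilityMeasure (ν z)) {E : Set (Sph d)}
    (hE : MeasurableSet E) : Measurable (fun p : Mat d × Z => Wm ν p E) := by
  let κ : Kernel Z (Sph d) := ⟨ν, hν⟩
  haveI : IsMarkovKernel κ := ⟨hp⟩
  have h := Kernel.measurable_kernel_prodMk_left
    (κ := κ.comap (Prod.snd : Mat d × Z → Z) measurable_snd) (meas_proj_adj hE)
  convert h using 1
  funext p
  rw [Wm, Measure.map_apply (meas_proj_left _) hE]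
  rfl

lemma meas_Wm_int {Z : Type} {d : ℕ} [MeasurableSpace Z] {ν : Z → Measure (Sph d)}
    (hν : Measurable ν) (hp : ∀ z, IsProbabilityMeasure (ν z)) {φ : Sph d → ℝ}
    (hφ : Measurable φ) : Measurable (fun p : Mat d × Z => ∫ x, φ x ∂(Wm ν p)) := by
  let κ : Kernel Z (Sph d) := ⟨ν, hν⟩
  haveI : IsMarkovKernel κ := ⟨hp⟩
  have h := StronglyMeasurable.integral_kernel_prod_right'
    (κ := κ.comap (Prod.snd : Mat d × Z → Z) measurable_snd)
    (Measurable.comp (g := φ) hφ (meas_proj_adj (Z := Z) (d := d))).stronglyMeasurable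
  convert h.measurable using 1
  funext p
  rw [Wm, integral_map (meas_proj_left _).aemeasurable hφ.aestronglyMeasurable]
  rfl

lemma Wm_mart {Z : Type} {d : ℕ} [MeasurableSpace Z] {ν : Z → Measure (Sph d)}
    (hν : Measurable ν) (P : Kernel Z Z) {A : Z → Mat d} (hAdet : ∀ z, (A z).det = 1)
    (htwist : ∀ z, ν z = Measure.map (projAct (A z)⁻¹) ((P z).bind ν))
    {M : Mat d} (hM : M.det = 1) (z : Z) {E : Set (Sph d)} (hE : MeasurableSet E) :
    ∫⁻ y, Wm ν (A z * M, y) E ∂(P z) = Wm ν (M, z) E := by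
  have h1 : ∀ y, Wm ν (A z * M, y) E = ν y (projAct (A z * M).adjugate ⁻¹' E) := fun y => by
    rw [Wm, Measure.map_apply (meas_proj_left _) hE]
  simp_rw [h1]
  rw [← Measure.bind_apply (meas_proj_left _ hE) hν.aemeasurable]
  rw [Wm, htwist z, inv_eq_adj (hAdet z), Measure.map_map (meas_proj_left _) (meas_proj_left _),
    Measure.map_apply ((meas_proj_left _).comp (meas_proj_left _)) hE]
  congr 1
  ext x
  simp only [Set.mem_preimage, Function.comp_apply]
  rw [Matrix.adjugate_mul_distrib, proj_mul (det_adj hM) (det_adj (hAdet z))]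

lemma Wm_int_shift {Z : Type} {d : ℕ} [MeasurableSpace Z] {ν : Z → Measure (Sph d)}
    {B : Mat d} (hB : B.det = 1) {φ : Sph d → ℝ} (hφ : Measurable φ)
    {M : Mat d} (hM : M.det = 1) (y : Z) :
    ∫ x, φ (projAct M x) ∂(Wm ν (B * M, y)) = ∫ x, φ x ∂(Wm ν (B, y)) := by
  have hm : Measurable (fun x => φ (projAct M x)) := hφ.comp (meas_proj_left M)
  rw [Wm, Wm, integral_map (meas_proj_left _).aemeasurable hφ.aestronglyMeasurable,
    integral_map (meas_proj_left _).aemeasurable hm.aestronglyMeasurable]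
  congr 1
  funext x
  dsimp only
  rw [Matrix.adjugate_mul_distrib, proj_mul (det_adj hM) (det_adj hB), proj_adj hM]

/-- test difference -/
noncomputable def Dt {Z : Type} {d : ℕ} [MeasurableSpace Z] (ν : Z → Measure (Sph d))
    (A : Z → Mat d) (φ : Sph d → ℝ) (q : Z × Z) : ℝ :=
  |∫ x, φ x ∂(Wm ν (A q.1, q.2)) - ∫ x, φ x ∂(Wm ν (1, q.1))|

lemma Dt_meas {Z : Type} {d : ℕ} [MeasurableSpace Z] {ν : Z → Measure (Sph d)}
    (hν : Measurable ν) (hp : ∀ z, IsProbabilityMeasure (ν z)) {A : Z → Mat d} (hA : Measurable A)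
    {φ : Sph d → ℝ} (hφ : Measurable φ) : Measurable (Dt ν A φ) := by
  have h1 := Measurable.comp (meas_Wm_int hν hp hφ)
    (((hA.comp measurable_fst).prodMk measurable_snd : Measurable fun q : Z × Z => (A q.1, q.2)))
  have h2 := Measurable.comp (meas_Wm_int hν hp hφ)
    ((measurable_const.prodMk measurable_fst : Measurable fun q : Z × Z => ((1 : Mat d), q.1)))
  exact measurable_norm.comp (h1.sub h2)

/-- entropy along cells -/
noncomputable def FF {Z : Type} {d : ℕ} [MeasurableSpace Z] (ν : Z → Measure (Sph d)) (m : ℕ)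
    (p : Mat d × Z) : ℝ := Fent (fun i => (Wm ν p).real (cell d m ⁻¹' {i}))

lemma FF_meas {Z : Type} {d : ℕ} [MeasurableSpace Z] {ν : Z → Measure (Sph d)}
    (hν : Measurable ν) (hp : ∀ z, IsProbabilityMeasure (ν z)) (m : ℕ) : Measurable (FF ν m) := by
  have hw : ∀ i, Measurable fun p : Mat d × Z => (Wm ν p).real (cell d m ⁻¹' {i}) := fun i =>
    (meas_Wm hν hp (meas_cell d m (measurableSet_singleton i))).ennreal_toReal
  unfold FF Fent
  refine Finset.measurable_sum _ fun i _ => ?_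
  exact ((hw i).add_const _).mul (Real.measurable_log.comp ((hw i).add_const _))

lemma FF_bound {Z : Type} {d : ℕ} [MeasurableSpace Z] {ν : Z → Measure (Sph d)}
    (hp : ∀ z, IsProbabilityMeasure (ν z)) (m : ℕ) (p : Mat d × Z) :
    -(2 * Real.log ((2 * m + 1 : ℕ) ^ d : ℕ)) ≤ FF ν m p ∧ FF ν m p ≤ 2 * Real.log 2 := by
  haveI := Wm_prob hp p
  have := Fent_bounds (w := fun i => (Wm ν p).real (cell d m ⁻¹' {i})) (fun i => measureReal_nonneg)
    (sum_cells_one _ (meas_cell d m))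
  simpa [FF] using this

lemma integrable_bdd2 {S : Type*} [MeasurableSpace S] (W : Measure S) [IsFiniteMeasure W]
    {f : S → ℝ} (hf : Measurable f) (a b : ℝ) (hb : ∀ x, a ≤ f x ∧ f x ≤ b) : Integrable f W := by
  refine integrable_bdd W hf (|a| + |b|) fun x => ?_
  rw [abs_le]
  constructor
  · linarith [(hb x).1, neg_abs_le a, abs_nonneg b]
  · linarith [(hb x).2, le_abs_self b, abs_nonneg a]

lemma FF_int {Z : Type} {d : ℕ} [MeasurableSpace Z] {ν : Z → Measure (Sph d)}
    (hν : Measurable ν) (hp : ∀ z, IsProbabilityMeasure (ν z)) (m : ℕ)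
    (ρ : Measure (Mat d × Z)) [IsProbabilityMeasure ρ] : Integrable (FF ν m) ρ :=
  integrable_bdd2 ρ (FF_meas hν hp m) _ _ (FF_bound hp m)

/-- lifted kernel -/
noncomputable def Pl {Z : Type} {d : ℕ} [MeasurableSpace Z] (P : Kernel Z Z) :
    Kernel (Mat d × Z) Z := P.comap Prod.snd measurable_snd

instance {Z : Type} {d : ℕ} [MeasurableSpace Z] (P : Kernel Z Z) [IsMarkovKernel P] :
    IsMarkovKernel (Pl (d := d) P) := by unfold Pl; infer_instance

/-- transition map -/
noncomputable def Tm {Z : Type} {d : ℕ} (A : Z → Mat d) (q : (Mat d × Z) × Z) : Mat d × Z :=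
  (A q.1.2 * q.1.1, q.2)

lemma Tm_meas {Z : Type} {d : ℕ} [MeasurableSpace Z] {A : Z → Mat d} (hA : Measurable A) :
    Measurable (Tm A) := by
  refine Measurable.prodMk ?_ measurable_snd
  refine measurable_mat_iff.2 fun i j => ?_
  simp only [Matrix.mul_apply]
  refine Finset.measurable_sum _ fun k _ => ?_
  exact (measurable_mat_iff.1 (hA.comp (measurable_snd.comp measurable_fst)) i k).mul
    (measurable_mat_iff.1 (measurable_fst.comp measurable_fst) k j)

lemma step {Z : Type} {d : ℕ} [MeasurableSpace Z] {ν : Z → Measure (Sph d)}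
    (hν : Measurable ν) (hp : ∀ z, IsProbabilityMeasure (ν z))
    (P : Kernel Z Z) [IsMarkovKernel P] {A : Z → Mat d} (hA : Measurable A)
    (hAdet : ∀ z, (A z).det = 1)
    (htwist : ∀ z, ν z = Measure.map (projAct (A z)⁻¹) ((P z).bind ν))
    (ρ : Measure (Mat d × Z)) [IsProbabilityMeasure ρ] (hdet : ∀ᵐ p ∂ρ, p.1.det = 1)
    {φ : Sph d → ℝ} (hφ : Measurable φ) (hφ1 : ∀ x, |φ x| ≤ 1) {L : ℝ} (hL0 : 0 ≤ L)
    (hL : ∀ x y, |φ x - φ y| ≤ L * dist x y) {m : ℕ} (hm : 0 < m) {R : ℝ} (hR : 1 ≤ R)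
    {t : ℝ} (ht : 0 ≤ t) :
    2 * t * ∫ q, Dt ν A φ (q.1.2, q.2) ∂(ρ ⊗ₘ Pl P) ≤
      (∫ p, FF ν m p ∂((ρ ⊗ₘ Pl P).map (Tm A)) - ∫ p, FF ν m p ∂ρ) + 8 * t ^ 2 +
      2 * t * (2 * ρ.real {p | R < matOpNorm p.1} +
        2 * (L * (CL d * R ^ (d + 1) * (d / m)))) := by
  set θ := ρ ⊗ₘ Pl (d := d) P with hθ
  set η := L * (CL d * R ^ (d + 1) * (d / m)) with hη
  have hη0 : 0 ≤ η := by have := CL_nonneg d; positivity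
  have hTm := Tm_meas hA
  let w : (Fin d → Fin (2 * m + 1)) → Mat d × Z → ℝ := fun i p => (Wm ν p).real (cell d m ⁻¹' {i})
  have hw : ∀ i, Measurable (w i) := fun i =>
    (meas_Wm hν hp (meas_cell d m (measurableSet_singleton i))).ennreal_toReal
  have hw0 : ∀ i p, 0 ≤ w i p := fun i p => measureReal_nonneg
  have hw1 : ∀ i p, w i p ≤ 1 := fun i p => by
    haveI := Wm_prob hp p
    exact measureReal_le_one
  have hws : ∀ p, ∑ i, w i p = 1 := fun p => by
    haveI := Wm_prob hp p
    exact sum_cells_one _ (meas_cell d m)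
  have hdetθ : ∀ᵐ q ∂θ, q.1.1.det = 1 := by
    refine Measure.ae_compProd_of_ae_fst _ ?_ hdet
    have : Measurable fun p : Mat d × Z => p.1.det :=
      (Continuous.matrix_det continuous_id).measurable.comp measurable_fst
    exact this (measurableSet_singleton 1)
  have hfst : θ.map Prod.fst = ρ := by
    have := Measure.fst_compProd ρ (Pl (d := d) P)
    exact this
  -- integral identities
  let N : ℝ := Fintype.card (Fin d → Fin (2 * m + 1))
  have hN : 0 < 1 / N := by
    have : 0 < Fintype.card (Fin d → Fin (2 * m + 1)) := Fintype.card_pos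
    positivity
  let G : (Fin d → Fin (2 * m + 1)) → (Mat d × Z) × Z → ℝ := fun i q =>
    (1 + Real.log (w i q.1 + 1 / N)) * (w i (Tm A q) - w i q.1)
  have hGm : ∀ i, Measurable (G i) := fun i => by
    have a1 := (hw i).comp (measurable_fst : Measurable (Prod.fst : (Mat d × Z) × Z → Mat d × Z))
    have a2 := (hw i).comp hTm
    exact ((Real.measurable_log.comp (a1.add_const (1 / N))).const_add 1).mul (a2.sub a1)
  have hcb : ∀ i p, |1 + Real.log (w i p + 1 / N)| ≤ 1 + (|Real.log (1 / N)| + |Real.log (1 + 1 / N)|) := by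
    intro i p
    have l1 : Real.log (1 / N) ≤ Real.log (w i p + 1 / N) :=
      Real.log_le_log hN (by linarith [hw0 i p])
    have l2 : Real.log (w i p + 1 / N) ≤ Real.log (1 + 1 / N) :=
      Real.log_le_log (by linarith [hw0 i p]) (by linarith [hw1 i p])
    rw [abs_le]
    constructor
    · linarith [neg_abs_le (Real.log (1 / N)), abs_nonneg (Real.log (1 + 1 / N))]
    · linarith [le_abs_self (Real.log (1 + 1 / N)), abs_nonneg (Real.log (1 / N))]
  have hdb : ∀ i (q : (Mat d × Z) × Z), |w i (Tm A q) - w i q.1| ≤ 1 := fun i q => by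
    rw [abs_le]
    constructor <;> linarith [hw0 i (Tm A q), hw1 i (Tm A q), hw0 i q.1, hw1 i q.1]
  have hGi : ∀ i, Integrable (G i) θ := fun i => by
    refine integrable_bdd θ (hGm i) (1 + (|Real.log (1 / N)| + |Real.log (1 + 1 / N)|)) fun q => ?_
    rw [abs_mul]
    have := mul_le_mul (hcb i q.1) (hdb i q) (abs_nonneg _) (by positivity)
    linarith
  have hG0 : ∀ i, ∫ q, G i q ∂θ = 0 := fun i => by
    rw [hθ, Measure.integral_compProd (hGi i)]
    rw [integral_eq_zero_of_ae]
    filter_upwards [hdet] with p hpd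
    simp only [G, Pi.zero_apply]
    rw [integral_const_mul]
    have hwT : Measurable fun y => w i (A p.2 * p.1, y) :=
      (hw i).comp (measurable_const.prodMk measurable_id)
    have e : ∫ y, w i (A p.2 * p.1, y) ∂(P p.2) = w i p := by
      have hmm : Measurable fun y => Wm ν (A p.2 * p.1, y) (cell d m ⁻¹' {i}) :=
        (meas_Wm hν hp (meas_cell d m (measurableSet_singleton i))).comp
          (measurable_const.prodMk measurable_id)
      have e1 := integral_toReal (μ := P p.2) hmm.aemeasurable (Eventually.of_forall fun y => by
        haveI := Wm_prob hp (A p.2 * p.1, y)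
        exact measure_lt_top _ _)
      rw [Wm_mart hν P hAdet htwist hpd p.2 (meas_cell d m (measurableSet_singleton i))] at e1
      exact e1
    have e2 : ∫ y, (w i (Tm A (p, y)) - w i p) ∂(Pl P p) = 0 := by
      change ∫ y, (w i (A p.2 * p.1, y) - w i p) ∂(P p.2) = 0
      rw [integral_sub (integrable_bdd _ hwT 1 fun y => by
        rw [abs_of_nonneg (hw0 _ _)]; exact hw1 _ _) (integrable_const _), e]
      simp
    rw [e2, mul_zero]
  let H : (Mat d × Z) × Z → ℝ := fun q => ∑ i, |w i (Tm A q) - w i q.1|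
  have hHm : Measurable H := by
    refine Finset.measurable_sum _ fun i _ => ?_
    have a1 := (hw i).comp (measurable_fst : Measurable (Prod.fst : (Mat d × Z) × Z → Mat d × Z))
    have a2 := (hw i).comp hTm
    exact measurable_norm.comp (a2.sub a1)
  have hHi : Integrable H θ := by
    refine integrable_finsetSum _ fun i _ => ?_
    have a1 := (hw i).comp (measurable_fst : Measurable (Prod.fst : (Mat d × Z) × Z → Mat d × Z))
    have a2 := (hw i).comp hTm
    refine integrable_bdd θ (measurable_norm.comp (a2.sub a1)) 1 fun q => ?_
    have := hdb i q
    simpa using this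
  haveI : IsProbabilityMeasure (θ.map (Tm A)) := Measure.isProbabilityMeasure_map hTm.aemeasurable
  have hFT : Integrable (fun q => FF ν m (Tm A q)) θ :=
    integrable_bdd2 θ ((FF_meas hν hp m).comp hTm) _ _ (fun q => FF_bound hp m _)
  have hF1 : Integrable (fun q : (Mat d × Z) × Z => FF ν m q.1) θ :=
    integrable_bdd2 θ ((FF_meas hν hp m).comp measurable_fst) _ _ (fun q => FF_bound hp m _)
  have eT : ∫ p, FF ν m p ∂(θ.map (Tm A)) = ∫ q, FF ν m (Tm A q) ∂θ :=
    integral_map hTm.aemeasurable (FF_meas hν hp m).aestronglyMeasurable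
  have e1 : ∫ p, FF ν m p ∂ρ = ∫ q, FF ν m q.1 ∂θ := by
    conv_lhs => rw [← hfst]
    exact integral_map measurable_fst.aemeasurable (FF_meas hν hp m).aestronglyMeasurable
  have I1 : 2 * t * ∫ q, H q ∂θ - 8 * t ^ 2 ≤
      ∫ p, FF ν m p ∂(θ.map (Tm A)) - ∫ p, FF ν m p ∂ρ := by
    rw [eT, e1, ← integral_sub hFT hF1]
    have hGs : Integrable (fun q => ∑ i, G i q) θ := integrable_finsetSum _ fun i _ => hGi i
    have e : ∫ q, (∑ i, G i q + 2 * t * H q - 8 * t ^ 2) ∂θ = 2 * t * ∫ q, H q ∂θ - 8 * t ^ 2 := by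
      have hs2 : Integrable (fun q => ∑ i, G i q + 2 * t * H q) θ := hGs.add (hHi.const_mul _)
      rw [integral_sub hs2 (integrable_const _),
        integral_add hGs (hHi.const_mul _), integral_finsetSum _ fun i _ => hGi i,
        integral_const_mul]
      simp [hG0]
    rw [← e]
    refine integral_mono ((hGs.add (hHi.const_mul _)).sub (integrable_const _)) (hFT.sub hF1) ?_
    intro q
    exact Fent_ineq (fun i => hw0 i q.1) (fun i => hw0 i (Tm A q)) (hws q.1) (hws (Tm A q)) ht
  let B : Set (Mat d × Z) := {p | R < matOpNorm p.1}
  have hB : MeasurableSet B := by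
    have : Measurable fun p : Mat d × Z => matOpNorm p.1 := meas_opNorm.comp measurable_fst
    exact measurableSet_lt measurable_const this
  have hI : Integrable (fun q : (Mat d × Z) × Z => B.indicator (fun _ => (2 : ℝ)) q.1) θ := by
    refine integrable_bdd θ ((measurable_const.indicator hB).comp measurable_fst) 2 fun q => ?_
    by_cases h : q.1 ∈ B <;> simp [h]
  have eB : ∫ q : (Mat d × Z) × Z, B.indicator (fun _ => (2 : ℝ)) q.1 ∂θ = 2 * ρ.real B := by
    have := integral_map (μ := θ) (φ := Prod.fst) (f := B.indicator (fun _ => (2 : ℝ)))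
      measurable_fst.aemeasurable (measurable_const.indicator hB).aestronglyMeasurable
    rw [← this, hfst, integral_indicator_const _ hB, smul_eq_mul, mul_comm]
  have hDi : Integrable (fun q : (Mat d × Z) × Z => Dt ν A φ (q.1.2, q.2)) θ := by
    refine integrable_bdd θ ((Dt_meas hν hp hA hφ).comp
      ((measurable_snd.comp measurable_fst).prodMk measurable_snd)) 2 fun q => ?_
    haveI := Wm_prob hp (A q.1.2, q.2)
    haveI := Wm_prob hp ((1 : Mat d), q.1.2)
    rw [Dt, abs_abs]
    exact test_triv _ _ hφ1
  have I2 : ∫ q, Dt ν A φ (q.1.2, q.2) ∂θ ≤ ∫ q, H q ∂θ + (2 * ρ.real B + 2 * η) := by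
    have e : ∫ q, (H q + (B.indicator (fun _ => (2 : ℝ)) q.1 + 2 * η)) ∂θ =
        ∫ q, H q ∂θ + (2 * ρ.real B + 2 * η) := by
      have hs2 : Integrable (fun q : (Mat d × Z) × Z =>
        B.indicator (fun _ => (2 : ℝ)) q.1 + 2 * η) θ := hI.add (integrable_const _)
      rw [integral_add hHi hs2, integral_add hI (integrable_const _), eB]
      simp
    rw [← e]
    refine integral_mono_ae hDi (hHi.add (hI.add (integrable_const _))) ?_
    filter_upwards [hdetθ] with q hq
    haveI := Wm_prob hp (A q.1.2, q.2)
    haveI := Wm_prob hp ((1 : Mat d), q.1.2)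
    have hH0 : 0 ≤ H q := Finset.sum_nonneg fun i _ => abs_nonneg _
    by_cases hqB : q.1 ∈ B
    · rw [Set.indicator_of_mem hqB]
      have : Dt ν A φ (q.1.2, q.2) ≤ 2 := test_triv _ _ hφ1
      linarith
    · rw [Set.indicator_of_notMem hqB, zero_add]
      have hqR : matOpNorm q.1.1 ≤ R := not_lt.1 hqB
      unfold Dt
      dsimp only
      rw [← Wm_int_shift (hAdet q.1.2) hφ hq, ← Wm_int_shift Matrix.det_one hφ hq, one_mul]
      haveI := Wm_prob hp (A q.1.2 * q.1.1, q.2)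
      haveI := Wm_prob hp q.1
      refine test_bound (Wm ν q.1) (Wm ν (A q.1.2 * q.1.1, q.2)) (meas_cell d m)
        (hφ.comp (meas_proj_left q.1.1)) (fun x => hφ1 _) ?_
      intro x y hxy
      refine (hL _ _).trans ?_
      refine mul_le_mul_of_nonneg_left ?_ hL0
      refine (proj_lip hq hR hqR x y).trans ?_
      refine mul_le_mul_of_nonneg_left (cell_dist hm hxy) ?_
      have := CL_nonneg d
      positivity
  have I3 := mul_le_mul_of_nonneg_left I2 (by linarith : 0 ≤ 2 * t)
  have : ρ.real {p : Mat d × Z | R < matOpNorm p.1} = ρ.real B := rfl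
  rw [this]
  linarith

end MF

namespace MF

/-- law of the product and the current position -/
noncomputable def rho {Z : Type} {d : ℕ} [MeasurableSpace Z] (P : Kernel Z Z) (μ : Measure Z)
    (A : Z → Mat d) : ℕ → Measure (Mat d × Z)
  | 0 => μ.map (fun z => ((1 : Mat d), z))
  | k + 1 => (rho P μ A k ⊗ₘ Pl P).map (Tm A)

lemma rho_prob {Z : Type} {d : ℕ} [MeasurableSpace Z] (P : Kernel Z Z) [IsMarkovKernel P]
    (μ : Measure Z) [IsProbabilityMeasure μ] {A : Z → Mat d} (hA : Measurable A) (k : ℕ) :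
    IsProbabilityMeasure (rho P μ A k) := by
  induction k with
  | zero =>
    exact Measure.isProbabilityMeasure_map (measurable_const.prodMk measurable_id).aemeasurable
  | succ k ih =>
    rw [rho]
    exact Measure.isProbabilityMeasure_map (Tm_meas hA).aemeasurable

lemma meas_one_pair {Z : Type} {d : ℕ} [MeasurableSpace Z] :
    Measurable (fun z : Z => ((1 : Mat d), z)) := measurable_const.prodMk measurable_id

lemma meas_det_set {Z : Type} {d : ℕ} [MeasurableSpace Z] :
    MeasurableSet {p : Mat d × Z | p.1.det = 1} := by
  have : Measurable fun p : Mat d × Z => p.1.det :=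
    (Continuous.matrix_det continuous_id).measurable.comp measurable_fst
  exact this (measurableSet_singleton 1)

lemma rho_det {Z : Type} {d : ℕ} [MeasurableSpace Z] (P : Kernel Z Z) [IsMarkovKernel P]
    (μ : Measure Z) [IsProbabilityMeasure μ] {A : Z → Mat d} (hA : Measurable A)
    (hAdet : ∀ z, (A z).det = 1) (k : ℕ) :
    ∀ᵐ p ∂(rho P μ A k), p.1.det = 1 := by
  induction k with
  | zero =>
    rw [rho, ae_map_iff meas_one_pair.aemeasurable meas_det_set]
    exact Eventually.of_forall fun z => Matrix.det_one
  | succ k ih =>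
    rw [rho, ae_map_iff (Tm_meas hA).aemeasurable meas_det_set]
    have := Measure.ae_compProd_of_ae_fst (Pl (d := d) P) meas_det_set ih
    filter_upwards [this] with q hq
    rw [Tm, Matrix.det_mul, hAdet, hq, one_mul]

lemma rho_succ_lint {Z : Type} {d : ℕ} [MeasurableSpace Z] (P : Kernel Z Z) [IsMarkovKernel P]
    (μ : Measure Z) [IsProbabilityMeasure μ] {A : Z → Mat d} (hA : Measurable A) (k : ℕ)
    {f : Mat d × Z → ℝ≥0∞} (hf : Measurable f) :
    ∫⁻ p, f p ∂(rho P μ A (k + 1)) =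
      ∫⁻ p, ∫⁻ y, f (A p.2 * p.1, y) ∂(P p.2) ∂(rho P μ A k) := by
  have := rho_prob P μ hA k
  have h : Measurable (fun q => f (Tm A q)) := hf.comp (Tm_meas hA)
  rw [rho, lintegral_map hf (Tm_meas hA), Measure.lintegral_compProd h]
  rfl

lemma rho_snd {Z : Type} {d : ℕ} [MeasurableSpace Z] (P : Kernel Z Z) [IsMarkovKernel P]
    (μ : Measure Z) [IsProbabilityMeasure μ] (hstat : μ.bind (fun z => P z) = μ)
    {A : Z → Mat d} (hA : Measurable A) (k : ℕ) :
    (rho P μ A k).map Prod.snd = μ := by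
  induction k with
  | zero =>
    rw [rho, Measure.map_map measurable_snd meas_one_pair]
    exact Measure.map_id
  | succ k ih =>
    ext E hE
    have h1 : (rho P μ A (k + 1)).map Prod.snd E =
        ∫⁻ p, E.indicator 1 p.2 ∂(rho P μ A (k + 1)) := by
      rw [← lintegral_indicator_one hE, lintegral_map (measurable_one.indicator hE) measurable_snd]
    have hm : Measurable fun p : Mat d × Z => E.indicator (1 : Z → ℝ≥0∞) p.2 :=
      (measurable_one.indicator hE).comp measurable_snd
    rw [h1, rho_succ_lint P μ hA k hm]
    simp only
    have h2 : ∀ p : Mat d × Z, ∫⁻ y, E.indicator (1 : Z → ℝ≥0∞) y ∂(P p.2) = P p.2 E := fun p =>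
      lintegral_indicator_one hE
    simp_rw [h2]
    rw [← lintegral_map (f := fun z => P z E) (P.measurable_coe hE) measurable_snd, ih]
    conv_rhs => rw [← hstat]
    rw [Measure.bind_apply hE P.measurable.aemeasurable]

lemma g_meas {Z : Type} {d : ℕ} [MeasurableSpace Z] (P : Kernel Z Z) [IsMarkovKernel P]
    {A : Z → Mat d} (hA : Measurable A)
    {g : ℕ → Mat d → Z → ℝ≥0∞}
    (hg0 : ∀ M z, g 0 M z = ENNReal.ofReal (Real.log (matOpNorm M)))
    (hgs : ∀ n M z, g (n + 1) M z = ∫⁻ y, g n (A z * M) y ∂(P z)) (n : ℕ) :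
    Measurable (fun p : Mat d × Z => g n p.1 p.2) := by
  induction n with
  | zero =>
    simp_rw [hg0]
    have : Measurable fun p : Mat d × Z => matOpNorm p.1 := meas_opNorm.comp measurable_fst
    exact (Real.measurable_log.comp this).ennreal_ofReal
  | succ n ih =>
    simp_rw [hgs]
    have h := ih.comp (Tm_meas hA)
    exact h.lintegral_kernel_prod_right' (κ := Pl (d := d) P)

lemma g_rho {Z : Type} {d : ℕ} [MeasurableSpace Z] (P : Kernel Z Z) [IsMarkovKernel P]
    (μ : Measure Z) [IsProbabilityMeasure μ]
    {A : Z → Mat d} (hA : Measurable A)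
    {g : ℕ → Mat d → Z → ℝ≥0∞}
    (hg0 : ∀ M z, g 0 M z = ENNReal.ofReal (Real.log (matOpNorm M)))
    (hgs : ∀ n M z, g (n + 1) M z = ∫⁻ y, g n (A z * M) y ∂(P z)) (n : ℕ) :
    ∫⁻ z, g n 1 z ∂μ = ∫⁻ p, ENNReal.ofReal (Real.log (matOpNorm p.1)) ∂(rho P μ A n) := by
  have key : ∀ n k, ∫⁻ p, g n p.1 p.2 ∂(rho P μ A k) = ∫⁻ p, g 0 p.1 p.2 ∂(rho P μ A (k + n)) := by
    intro n
    induction n with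
    | zero => intro k; rfl
    | succ n ih =>
      intro k
      rw [← add_assoc, add_right_comm, ← ih (k + 1),
        rho_succ_lint P μ hA k (g_meas P hA hg0 hgs n)]
      simp_rw [hgs]
  have h := key n 0
  rw [zero_add] at h
  simp_rw [hg0] at h
  rw [← h, rho, lintegral_map (g_meas P hA hg0 hgs n) meas_one_pair]

lemma Dt_rho {Z : Type} {d : ℕ} [MeasurableSpace Z] (P : Kernel Z Z) [IsMarkovKernel P]
    (μ : Measure Z) [IsProbabilityMeasure μ] (hstat : μ.bind (fun z => P z) = μ)
    {A : Z → Mat d} (hA : Measurable A) (k : ℕ) {f : Z × Z → ℝ} (hf : Measurable f) {C : ℝ}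
    (hb : ∀ q, |f q| ≤ C) :
    ∫ q, f (q.1.2, q.2) ∂(rho P μ A k ⊗ₘ Pl P) = ∫ q, f q ∂(μ ⊗ₘ P) := by
  have := rho_prob P μ hA k
  have hm2 : Measurable (fun q : (Mat d × Z) × Z => f (q.1.2, q.2)) :=
    hf.comp ((measurable_snd.comp measurable_fst).prodMk measurable_snd)
  rw [Measure.integral_compProd (integrable_bdd _ hf C hb), Measure.integral_compProd
    (integrable_bdd _ hm2 C fun q => hb _)]
  have hm : StronglyMeasurable (fun z => ∫ y, f (z, y) ∂(P z)) :=
    hf.stronglyMeasurable.integral_kernel_prod_right'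
  conv_rhs => rw [← rho_snd P μ hstat hA k]
  rw [integral_map measurable_snd.aemeasurable hm.aestronglyMeasurable]
  rfl

lemma q_tendsto {Z : Type} {d : ℕ} [MeasurableSpace Z] (P : Kernel Z Z) [IsMarkovKernel P]
    (μ : Measure Z) [IsProbabilityMeasure μ]
    {A : Z → Mat d} (hA : Measurable A)
    {g : ℕ → Mat d → Z → ℝ≥0∞}
    (hg0 : ∀ M z, g 0 M z = ENNReal.ofReal (Real.log (matOpNorm M)))
    (hgs : ∀ n M z, g (n + 1) M z = ∫⁻ y, g n (A z * M) y ∂(P z))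
    (hlyap : Tendsto (fun n : ℕ => (∫⁻ z, g n 1 z ∂μ) / (n : ℝ≥0∞)) atTop (nhds 0))
    {δ : ℝ} (hδ : 0 < δ) :
    Tendsto (fun k : ℕ => (rho P μ A k).real {p | δ * k < Real.log (matOpNorm p.1)})
      atTop (nhds 0) := by
  have h1 : Tendsto (fun k : ℕ => (ENNReal.ofReal δ)⁻¹ * ((∫⁻ z, g k 1 z ∂μ) / (k : ℝ≥0∞)))
      atTop (nhds 0) := by
    have := ENNReal.Tendsto.const_mul (a := (ENNReal.ofReal δ)⁻¹) hlyap
      (Or.inr (by simp [hδ]))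
    simpa using this
  have h2 : Tendsto (fun k : ℕ => (rho P μ A k) {p | δ * k < Real.log (matOpNorm p.1)})
      atTop (nhds 0) := by
    refine tendsto_of_tendsto_of_tendsto_of_le_of_le' tendsto_const_nhds h1
      (Eventually.of_forall fun _ => zero_le) ?_
    filter_upwards [eventually_gt_atTop 0] with k hk
    have hk' : (0 : ℝ) < k := by exact_mod_cast hk
    rw [g_rho P μ hA hg0 hgs k]
    have hm : Measurable fun p : Mat d × Z => ENNReal.ofReal (Real.log (matOpNorm p.1)) := by
      have : Measurable fun p : Mat d × Z => matOpNorm p.1 := meas_opNorm.comp measurable_fst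
      exact (Real.measurable_log.comp this).ennreal_ofReal
    have h3 := mul_meas_ge_le_lintegral (μ := rho P μ A k) hm (ENNReal.ofReal (δ * k))
    have h4 : (rho P μ A k) {p | δ * k < Real.log (matOpNorm p.1)} ≤
        (rho P μ A k) {p | ENNReal.ofReal (δ * k) ≤ ENNReal.ofReal (Real.log (matOpNorm p.1))} :=
      measure_mono fun p (hp : δ * k < Real.log (matOpNorm p.1)) => ENNReal.ofReal_le_ofReal hp.le
    refine h4.trans ?_
    rw [mul_comm (ENNReal.ofReal δ)⁻¹, ← div_eq_mul_inv, ENNReal.le_div_iff_mul_le (by simp [hδ]) (by simp),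
      ENNReal.le_div_iff_mul_le (by simp [hk.ne']) (by simp)]
    refine le_trans (le_of_eq ?_) h3
    rw [ENNReal.ofReal_mul hδ.le, ENNReal.ofReal_natCast]
    ring
  have := (ENNReal.tendsto_toReal (by simp : (0 : ℝ≥0∞) ≠ ⊤)).comp h2
  rw [ENNReal.toReal_zero] at this
  exact this

lemma D_le_zero {Z : Type} {d : ℕ} [MeasurableSpace Z] {ν : Z → Measure (Sph d)}
    (hν : Measurable ν) (hp : ∀ z, IsProbabilityMeasure (ν z))
    (P : Kernel Z Z) [IsMarkovKernel P] 
    (μ : Measure Z) [IsProbabilityMeasure μ] (hstat : μ.bind (fun z => P z) = μ)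
    {A : Z → Mat d} (hA : Measurable A)
    (hAdet : ∀ z, (A z).det = 1)
    (htwist : ∀ z, ν z = Measure.map (projAct (A z)⁻¹) ((P z).bind ν))
    {g : ℕ → Mat d → Z → ℝ≥0∞}
    (hg0 : ∀ M z, g 0 M z = ENNReal.ofReal (Real.log (matOpNorm M)))
    (hgs : ∀ n M z, g (n + 1) M z = ∫⁻ y, g n (A z * M) y ∂(P z))
    (hlyap : Tendsto (fun n : ℕ => (∫⁻ z, g n 1 z ∂μ) / (n : ℝ≥0∞)) atTop (nhds 0))
    {φ : Sph d → ℝ} (hφ : Measurable φ) (hφ1 : ∀ x, |φ x| ≤ 1) {L : ℝ} (hL0 : 0 ≤ L)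
    (hL : ∀ x y, |φ x - φ y| ≤ L * dist x y) :
    ∫ q, Dt ν A φ q ∂(μ ⊗ₘ P) ≤ 0 := by
  set D := ∫ q, Dt ν A φ q ∂(μ ⊗ₘ P) with hD
  have hb : ∀ q, |Dt ν A φ q| ≤ 2 := fun q => by
    have := Wm_prob hp (A q.1, q.2)
    have := Wm_prob hp ((1 : Mat d), q.1)
    rw [Dt, abs_abs]
    exact test_triv _ _ hφ1
  have main : ∀ t : ℝ, 0 < t → D ≤ (d * (d + 2) + 4) * t := by
    intro t ht
    have hδ : 0 < t ^ 2 := by positivity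
    set δ := t ^ 2 with hδt
    let q : ℕ → ℝ := fun k => (rho P μ A k).real {p | δ * k < Real.log (matOpNorm p.1)}
    have hq : Tendsto q atTop (nhds 0) := q_tendsto P μ hA hg0 hgs hlyap hδ
    have hces := hq.cesaro
    have lim : Tendsto (fun n : ℕ => (Real.log 2 + d * Real.log 5) / t * (n : ℝ)⁻¹ +
        (d * (d + 2) + 4) * t + 2 * ((n : ℝ)⁻¹ * ∑ k ∈ Finset.range n, q k) +
        2 * (L * CL d * d) * Real.exp (-(δ * n))) atTop
        (nhds ((Real.log 2 + d * Real.log 5) / t * 0 + (d * (d + 2) + 4) * t + 2 * 0 +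
          2 * (L * CL d * d) * 0)) := by
      have hn : Tendsto (fun n : ℕ => (n : ℝ)) atTop atTop := tendsto_natCast_atTop_atTop
      refine (((tendsto_inv_atTop_zero.comp hn).const_mul _).add_const _ |>.add
        (hces.const_mul _)).add (Tendsto.const_mul _ ?_)
      exact Real.tendsto_exp_neg_atTop_nhds_zero.comp (hn.const_mul_atTop hδ)
    have lim' := lim
    rw [show (Real.log 2 + d * Real.log 5) / t * 0 + (d * (d + 2) + 4) * t + 2 * 0 +
          2 * (L * CL d * d) * 0 = (d * (d + 2) + 4) * t by ring] at lim'
    refine ge_of_tendsto lim' ?_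
    filter_upwards [eventually_gt_atTop 0] with n hn
    have hn' : (0 : ℝ) < n := by exact_mod_cast hn
    set R := Real.exp (δ * n) with hRdef
    have hR : 1 ≤ R := Real.one_le_exp (by positivity)
    set x := Real.exp ((d + 2) * (δ * n)) with hx
    have hx1 : 1 ≤ x := Real.one_le_exp (by positivity)
    set m := ⌈x⌉₊ with hm
    have hmx : x ≤ m := Nat.le_ceil x
    have hmx2 : (m : ℝ) < x + 1 := Nat.ceil_lt_add_one (by linarith)
    have hm0 : 0 < m := by
      have : (0 : ℝ) < m := by linarith
      exact_mod_cast this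
    have hm0' : (0 : ℝ) < m := by exact_mod_cast hm0
    set η := L * (CL d * R ^ (d + 1) * (d / m)) with hη
    have hstep : ∀ k ∈ Finset.range n, 2 * t * D ≤
        (∫ p, FF ν m p ∂(rho P μ A (k + 1)) - ∫ p, FF ν m p ∂(rho P μ A k)) +
          (8 * t ^ 2 + 2 * t * (2 * q k + 2 * η)) := by
      intro k hk
      have := rho_prob P μ hA k
      have h := step hν hp P hA hAdet htwist (rho P μ A k) (rho_det P μ hA hAdet k) hφ hφ1 hL0 hL
        hm0 hR ht.le
      rw [Dt_rho P μ hstat hA k (Dt_meas hν hp hA hφ) hb] at h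
      have hq' : (rho P μ A k).real {p | R < matOpNorm p.1} ≤ q k := by
        refine measureReal_mono ?_ (measure_ne_top _ _)
        intro p (hpR : R < matOpNorm p.1)
        have h1 : δ * n < Real.log (matOpNorm p.1) :=
          (Real.lt_log_iff_exp_lt (by linarith)).2 hpR
        have h2 : (k : ℝ) ≤ n := by exact_mod_cast (Finset.mem_range.1 hk).le
        have h3 := mul_le_mul_of_nonneg_left h2 hδ.le
        exact lt_of_le_of_lt h3 h1
      have h4 := mul_le_mul_of_nonneg_left hq' ht.le
      have e : ∫ p, FF ν m p ∂((rho P μ A k ⊗ₘ Pl P).map (Tm A)) =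
        ∫ p, FF ν m p ∂(rho P μ A (k + 1)) := rfl
      rw [e] at h
      linarith
    have hsum := Finset.sum_le_sum hstep
    rw [Finset.sum_add_distrib, Finset.sum_range_sub (fun k => ∫ p, FF ν m p ∂(rho P μ A k)),
      Finset.sum_const, Finset.card_range, nsmul_eq_mul, Finset.sum_add_distrib, Finset.sum_const,
      Finset.card_range, nsmul_eq_mul, ← Finset.mul_sum, Finset.sum_add_distrib,
      ← Finset.mul_sum, Finset.sum_const, Finset.card_range, nsmul_eq_mul] at hsum
    have hup : ∫ p, FF ν m p ∂(rho P μ A n) ≤ 2 * Real.log 2 := by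
      have := rho_prob P μ hA n
      have h := integral_mono (FF_int hν hp m (rho P μ A n)) (integrable_const (2 * Real.log 2))
        (fun p => (FF_bound hp m p).2)
      simpa using h
    have hlo : -(2 * Real.log ((2 * m + 1 : ℕ) ^ d : ℕ)) ≤ ∫ p, FF ν m p ∂(rho P μ A 0) := by
      have := rho_prob P μ hA 0
      have h := integral_mono (integrable_const (-(2 * Real.log ((2 * m + 1 : ℕ) ^ d : ℕ))))
        (FF_int hν hp m (rho P μ A 0)) (fun p => (FF_bound hp m p).1)
      simpa using h
    have hlog : Real.log ((2 * m + 1 : ℕ) ^ d : ℕ) ≤ d * (Real.log 5 + (d + 2) * (δ * n)) := by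
      push_cast
      rw [Real.log_pow]
      refine mul_le_mul_of_nonneg_left ?_ (Nat.cast_nonneg d)
      have : Real.log 5 + (d + 2) * (δ * n) = Real.log (5 * x) := by
        rw [Real.log_mul (by norm_num) (by positivity), hx, Real.log_exp]
      rw [this]
      exact Real.log_le_log (by positivity) (by linarith)
    have hηle : η ≤ L * CL d * d * Real.exp (-(δ * n)) := by
      have h1 : R ^ (d + 1) / m ≤ Real.exp (-(δ * n)) := by
        rw [div_le_iff₀ hm0']
        have : R ^ (d + 1) = Real.exp (-(δ * n)) * x := by
          rw [hRdef, hx, ← Real.exp_nat_mul, ← Real.exp_add]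
          congr 1
          push_cast
          ring
        rw [this]
        exact mul_le_mul_of_nonneg_left hmx (Real.exp_pos _).le
      have h2 : η = L * CL d * d * (R ^ (d + 1) / m) := by rw [hη]; ring
      rw [h2]
      refine mul_le_mul_of_nonneg_left h1 ?_
      have := CL_nonneg d
      positivity
    have hfin : (2 * t * n) * D ≤ (2 * t * n) * ((Real.log 2 + d * Real.log 5) / t * (n : ℝ)⁻¹ +
        (d * (d + 2) + 4) * t + 2 * ((n : ℝ)⁻¹ * ∑ k ∈ Finset.range n, q k) +
        2 * (L * CL d * d) * Real.exp (-(δ * n))) := by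
      have e : (2 * t * n) * ((Real.log 2 + d * Real.log 5) / t * (n : ℝ)⁻¹ +
        (d * (d + 2) + 4) * t + 2 * ((n : ℝ)⁻¹ * ∑ k ∈ Finset.range n, q k) +
        2 * (L * CL d * d) * Real.exp (-(δ * n))) =
        2 * (Real.log 2 + d * Real.log 5) + 2 * (d * ((d + 2) * (δ * n))) + n * (8 * t ^ 2) +
        2 * t * (2 * ∑ k ∈ Finset.range n, q k) +
        2 * t * (n * (2 * (L * CL d * d * Real.exp (-(δ * n))))) := by
        rw [hδt]
        field_simp
        ring
      rw [e]
      have h5 : 2 * t * (n * (2 * η)) ≤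
          2 * t * (n * (2 * (L * CL d * d * Real.exp (-(δ * n))))) := by gcongr
      nlinarith
    exact le_of_mul_le_mul_left hfin (by positivity)
  have lim : Tendsto (fun t : ℝ => ((d : ℝ) * (d + 2) + 4) * t) (nhdsWithin 0 (Set.Ioi 0)) (nhds 0) := by
    have : Tendsto (fun t : ℝ => ((d : ℝ) * (d + 2) + 4) * t) (nhds 0) (nhds (((d : ℝ) * (d + 2) + 4) * 0)) :=
      (continuous_const.mul continuous_id).tendsto 0
    rw [mul_zero] at this
    exact this.mono_left nhdsWithin_le_nhds
  refine ge_of_tendsto lim ?_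
  filter_upwards [self_mem_nhdsWithin] with t ht
  exact main t ht

end MF

namespace MF

lemma Wm_one {Z : Type} {d : ℕ} [MeasurableSpace Z] (ν : Z → Measure (Sph d)) (z : Z) :
    Wm ν ((1 : Mat d), z) = ν z := by
  have h : projAct ((1 : Mat d).adjugate) = id := by
    funext x
    rw [Matrix.adjugate_one]
    exact proj_one x
  rw [Wm]
  simp only
  rw [h, Measure.map_id]

lemma charFun_split {d : ℕ} (W : Measure (Sph d)) [IsProbabilityMeasure W]
    (t : EuclideanSpace ℝ (Fin d)) :
    charFun (W.map Subtype.val) t =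
      ((∫ x : Sph d, Real.cos (inner ℝ (x : EuclideanSpace ℝ (Fin d)) t) ∂W : ℝ) : ℂ) +
      ((∫ x : Sph d, Real.sin (inner ℝ (x : EuclideanSpace ℝ (Fin d)) t) ∂W : ℝ) : ℂ)
        * Complex.I := by
  have hi : Continuous fun x : Sph d => inner ℝ (x : EuclideanSpace ℝ (Fin d)) t :=
    continuous_subtype_val.inner continuous_const
  have hc : Integrable (fun x : Sph d => Real.cos (inner ℝ (x : EuclideanSpace ℝ (Fin d)) t)) W :=
    integrable_bdd W (Real.continuous_cos.comp hi).measurable 1 fun x => Real.abs_cos_le_one _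
  have hs : Integrable (fun x : Sph d => Real.sin (inner ℝ (x : EuclideanSpace ℝ (Fin d)) t)) W :=
    integrable_bdd W (Real.continuous_sin.comp hi).measurable 1 fun x => Real.abs_sin_le_one _
  rw [charFun_apply, integral_map measurable_subtype_coe.aemeasurable (by
    refine Continuous.aestronglyMeasurable ?_
    fun_prop)]
  rw [← integral_complex_ofReal, ← integral_complex_ofReal, ← integral_mul_const,
    ← integral_add hc.ofReal (hs.ofReal.mul_const _)]
  refine integral_congr_ae (Eventually.of_forall fun x => ?_)
  simp only
  rw [Complex.exp_mul_I, Complex.ofReal_cos, Complex.ofReal_sin]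

lemma eq_of_tests {d : ℕ} (W W' : Measure (Sph d)) [IsProbabilityMeasure W]
    [IsProbabilityMeasure W']
    (hc : ∀ n : ℕ, ∫ x : Sph d, Real.cos (inner ℝ (x : EuclideanSpace ℝ (Fin d))
        (TopologicalSpace.denseSeq (EuclideanSpace ℝ (Fin d)) n)) ∂W =
      ∫ x : Sph d, Real.cos (inner ℝ (x : EuclideanSpace ℝ (Fin d))
        (TopologicalSpace.denseSeq (EuclideanSpace ℝ (Fin d)) n)) ∂W')
    (hs : ∀ n : ℕ, ∫ x : Sph d, Real.sin (inner ℝ (x : EuclideanSpace ℝ (Fin d))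
        (TopologicalSpace.denseSeq (EuclideanSpace ℝ (Fin d)) n)) ∂W =
      ∫ x : Sph d, Real.sin (inner ℝ (x : EuclideanSpace ℝ (Fin d))
        (TopologicalSpace.denseSeq (EuclideanSpace ℝ (Fin d)) n)) ∂W') : W = W' := by
  have := Measure.isProbabilityMeasure_map (μ := W)
    (measurable_subtype_coe (p := fun x : EuclideanSpace ℝ (Fin d) =>
      x ∈ Metric.sphere (0 : EuclideanSpace ℝ (Fin d)) 1)).aemeasurable
  have := Measure.isProbabilityMeasure_map (μ := W')
    (measurable_subtype_coe (p := fun x : EuclideanSpace ℝ (Fin d) =>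
      x ∈ Metric.sphere (0 : EuclideanSpace ℝ (Fin d)) 1)).aemeasurable
  have h : charFun (W.map Subtype.val) = charFun (W'.map Subtype.val) := by
    refine Continuous.ext_on (TopologicalSpace.denseRange_denseSeq (EuclideanSpace ℝ (Fin d)))
      continuous_charFun continuous_charFun ?_
    rintro _ ⟨n, rfl⟩
    rw [charFun_split, charFun_split, hc n, hs n]
  have h2 := Measure.ext_of_charFun h
  have he : MeasurableEmbedding (Subtype.val : Sph d → EuclideanSpace ℝ (Fin d)) :=
    MeasurableEmbedding.subtype_coe Metric.isClosed_sphere.measurableSet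
  have h3 := congrArg
    (Measure.comap (Subtype.val : Sph d → EuclideanSpace ℝ (Fin d))) h2
  rwa [he.comap_map, he.comap_map] at h3

lemma lip_inner {d : ℕ} (t : EuclideanSpace ℝ (Fin d)) (x y : Sph d) :
    |inner ℝ (x : EuclideanSpace ℝ (Fin d)) t - inner ℝ (y : EuclideanSpace ℝ (Fin d)) t| ≤
      ‖t‖ * dist x y := by
  rw [← inner_sub_left, mul_comm, Subtype.dist_eq, dist_eq_norm]
  exact abs_real_inner_le_norm _ _

lemma ae_eq {Z : Type} {d : ℕ} [MeasurableSpace Z] {ν : Z → Measure (Sph d)}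
    (hν : Measurable ν) (hp : ∀ z, IsProbabilityMeasure (ν z))
    (P : Kernel Z Z) [IsMarkovKernel P]
    (μ : Measure Z) [IsProbabilityMeasure μ] (hstat : μ.bind (fun z => P z) = μ)
    {A : Z → Mat d} (hA : Measurable A)
    (hAdet : ∀ z, (A z).det = 1)
    (htwist : ∀ z, ν z = Measure.map (projAct (A z)⁻¹) ((P z).bind ν))
    {g : ℕ → Mat d → Z → ℝ≥0∞}
    (hg0 : ∀ M z, g 0 M z = ENNReal.ofReal (Real.log (matOpNorm M)))
    (hgs : ∀ n M z, g (n + 1) M z = ∫⁻ y, g n (A z * M) y ∂(P z))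
    (hlyap : Tendsto (fun n : ℕ => (∫⁻ z, g n 1 z ∂μ) / (n : ℝ≥0∞)) atTop (nhds 0)) :
    ∀ᵐ q ∂(μ ⊗ₘ P), (ν q.1).map (projAct (A q.1)) = ν q.2 := by
  have test : ∀ (φ : Sph d → ℝ), Measurable φ → (∀ x, |φ x| ≤ 1) → ∀ L : ℝ, 0 ≤ L →
      (∀ x y, |φ x - φ y| ≤ L * dist x y) →
      ∀ᵐ q ∂(μ ⊗ₘ P), ∫ x, φ x ∂(Wm ν (A q.1, q.2)) = ∫ x, φ x ∂(Wm ν (1, q.1)) := by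
    intro φ hφ hφ1 L hL0 hL
    have h := D_le_zero hν hp P μ hstat hA hAdet htwist hg0 hgs hlyap hφ hφ1 hL0 hL
    have hb : ∀ q, |Dt ν A φ q| ≤ 2 := fun q => by
      have := Wm_prob hp (A q.1, q.2)
      have := Wm_prob hp ((1 : Mat d), q.1)
      rw [Dt, abs_abs]
      exact test_triv _ _ hφ1
    have h0 : 0 ≤ Dt ν A φ := fun q => abs_nonneg _
    have hI : Integrable (Dt ν A φ) (μ ⊗ₘ P) :=
      integrable_bdd _ (Dt_meas hν hp hA hφ) 2 hb
    have h1 := (integral_eq_zero_iff_of_nonneg h0 hI).1 (le_antisymm h (integral_nonneg h0))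
    filter_upwards [h1] with q hq
    exact sub_eq_zero.1 (abs_eq_zero.1 hq)
  have hi : ∀ t, Continuous fun x : Sph d => inner ℝ (x : EuclideanSpace ℝ (Fin d)) t :=
    fun t => continuous_subtype_val.inner continuous_const
  have hc := ae_all_iff.2 fun n : ℕ =>
    test (fun x => Real.cos (inner ℝ (x : EuclideanSpace ℝ (Fin d))
        (TopologicalSpace.denseSeq (EuclideanSpace ℝ (Fin d)) n)))
      (Real.continuous_cos.comp (hi _)).measurable (fun x => Real.abs_cos_le_one _)
      _ (norm_nonneg _) fun x y => (Real.abs_cos_sub_cos_le _ _).trans (lip_inner _ x y)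
  have hs := ae_all_iff.2 fun n : ℕ =>
    test (fun x => Real.sin (inner ℝ (x : EuclideanSpace ℝ (Fin d))
        (TopologicalSpace.denseSeq (EuclideanSpace ℝ (Fin d)) n)))
      (Real.continuous_sin.comp (hi _)).measurable (fun x => Real.abs_sin_le_one _)
      _ (norm_nonneg _) fun x y => (Real.abs_sin_sub_sin_le _ _).trans (lip_inner _ x y)
  filter_upwards [hc, hs] with q hqc hqs
  have := Wm_prob hp (A q.1, q.2)
  have := Wm_prob hp ((1 : Mat d), q.1)
  have h := eq_of_tests _ _ hqc hqs
  rw [Wm_one, Wm] at h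
  rw [← h, Measure.map_map (meas_proj_left _) (meas_proj_left _)]
  have e : projAct (A q.1) ∘ projAct (A q.1).adjugate = id :=
    funext fun x => proj_adj (hAdet q.1) x
  simp only
  rw [e, Measure.map_id]

end MF


/-- **A Markovian version of Furstenberg's criterion.**
Let `P` be a Markov kernel on a standard Borel space `Z` with stationary probability
measure `μ`, and let `A : Z → SL(d,ℝ)` be measurable.  Suppose `ν : Z → 𝒫(S^{d-1})` is a
measurable family of probability measures on the sphere satisfying the twisted pullback
condition `ν_z = (A(z)⁻¹)_* ∫ ν_y P(z,dy)`.  Here `g n M z` denotes the expected value of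
`log‖A(z_{n-1}) ⋯ A(z₀) M‖` along the chain started at `z₀ = z`, so that the top Lyapunov
exponent is `λ⁺ = lim (1/n) ∫ g n 1 z μ(dz)`.  If `λ⁺` exists and equals `0`, then the
family is almost surely invariant: `A(z₀)_* ν_{z₀} = ν_{z₁}` for `P(z₀,dz₁)μ(dz₀)`-almost
every `(z₀, z₁)`. -/
theorem markov_furstenberg_criterion
    {Z : Type} [MeasurableSpace Z] [StandardBorelSpace Z]
    (P : Kernel Z Z) [IsMarkovKernel P]
    (μ : Measure Z) [IsProbabilityMeasure μ]
    (hstat : μ.bind (fun z => P z) = μ)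
    (d : ℕ) (hd : 1 ≤ d)
    (A : Z → Matrix (Fin d) (Fin d) ℝ)
    (hAmeas : ∀ i j, Measurable fun z => A z i j)
    (hAdet : ∀ z, (A z).det = 1)
    (ν : Z → Measure (Metric.sphere (0 : EuclideanSpace ℝ (Fin d)) 1))
    (hνprob : ∀ z, IsProbabilityMeasure (ν z))
    (hνmeas : ∀ E, MeasurableSet E → Measurable fun z => ν z E)
    (htwist : ∀ z, ν z = Measure.map (projAct (A z)⁻¹) ((P z).bind ν))
    (g : ℕ → Matrix (Fin d) (Fin d) ℝ → Z → ℝ≥0∞)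
    (hg0 : ∀ M z, g 0 M z = ENNReal.ofReal (Real.log (matOpNorm M)))
    (hgs : ∀ n M z, g (n + 1) M z = ∫⁻ y, g n (A z * M) y ∂(P z))
    (hlyap : Tendsto (fun n : ℕ => (∫⁻ z, g n 1 z ∂μ) / (n : ℝ≥0∞)) atTop (nhds 0)) :
    ∀ᵐ p ∂(μ.compProd P), (ν p.1).map (projAct (A p.1)) = ν p.2 := by
  exact MF.ae_eq (Measure.measurable_of_measurable_coe ν hνmeas) hνprob P μ hstat
    (MF.measurable_mat_iff.2 hAmeas) hAdet htwist hg0 hgs hlyap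
end

section
/- Let (X, 𝓕, ρ) be a standard Borel probability space, let T : X → X be measurable with T_*ρ = ρ, let d ≥ 1, and let B : X → SL(d,ℝ) be measurable. For M ∈ SL(d,ℝ) let M act on the unit sphere S^{d−1} ⊆ ℝ^d by v ↦ Mv/|Mv|, and define the extended dynamics T̂ : X × S^{d−1} → X × S^{d−1} by T̂(x,v) := (Tx, B(x)v). Let γ : X → 𝒫(S^{d−1}) be a measurable family of probability measures such that the measure γ_x(dv)ρ(dx) on X × S^{d−1} is invariant under T̂. Define λ⁺ := lim_{n→∞} (1/n) ∫ log‖B(T^{n−1}x) ⋯ B(Tx) B(x)‖ ρ(dx), where ‖·‖ is the operator norm (note log‖M‖ ≥ 0 for M ∈ SL(d,ℝ), so the integrals are well defined in [0,∞]). If this limit exists and equals 0, then B(x)_* γ_x = γ_{Tx} for ρ-almost every x ∈ X. -/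
open MeasureTheory Filter
open scoped ENNReal

section helpers
open scoped ProbabilityTheory

lemma aux_pt {t s : ℝ} (ht : 0 < t) (hs : 0 < s) :
    (√t - √s)^2 ≤ t * Real.log t - t * Real.log s - t + s := by
  have h1 : 0 < √t := Real.sqrt_pos.2 ht
  have h2 : 0 < √s := Real.sqrt_pos.2 hs
  have e1 : √t^2 = t := Real.sq_sqrt ht.le
  have e2 : √s^2 = s := Real.sq_sqrt hs.le
  have h := Real.log_le_sub_one_of_pos (div_pos h2 h1)
  rw [Real.log_div h2.ne' h1.ne', Real.log_sqrt hs.le, Real.log_sqrt ht.le] at h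
  have h3 := mul_le_mul_of_nonneg_left h ht.le
  have : t * (√s / √t - 1) = √t * √s - t := by
    field_simp
    nlinarith
  rw [this] at h3
  nlinarith

lemma aux_sum {ι : Type*} [Fintype ι] (p q : ι → ℝ) (hp : ∀ i, 0 < p i) (hq : ∀ i, 0 < q i)
    (sp : ∑ i, p i = 2) (sq : ∑ i, q i = 2) :
    (∑ i, |p i - q i|)^2 ≤ 8 * ∑ i, (p i * Real.log (p i) - p i * Real.log (q i)) := by
  have h1 : ∑ i, (√(p i) - √(q i))^2 ≤ ∑ i, (p i * Real.log (p i) - p i * Real.log (q i)) := by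
    calc _ ≤ ∑ i, ((p i * Real.log (p i) - p i * Real.log (q i)) - p i + q i) :=
          Finset.sum_le_sum fun i _ => aux_pt (hp i) (hq i)
      _ = _ := by
          rw [Finset.sum_add_distrib, Finset.sum_sub_distrib, sp, sq]; ring
  have h2 : ∑ i, (√(p i) + √(q i))^2 ≤ 8 := by
    calc _ ≤ ∑ i, (2 * p i + 2 * q i) := by
          refine Finset.sum_le_sum fun i _ => ?_
          nlinarith [Real.sq_sqrt (hp i).le, Real.sq_sqrt (hq i).le, sq_nonneg (√(p i) - √(q i))]
      _ = 8 := by rw [Finset.sum_add_distrib, ← Finset.mul_sum, ← Finset.mul_sum, sp, sq]; norm_num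
  have h3 : ∑ i, |p i - q i| = ∑ i, |√(p i) - √(q i)| * (√(p i) + √(q i)) := by
    refine Finset.sum_congr rfl fun i _ => ?_
    rw [← abs_of_nonneg (add_nonneg (Real.sqrt_nonneg (p i)) (Real.sqrt_nonneg (q i))), ← abs_mul]
    congr 1
    nlinarith [Real.sq_sqrt (hp i).le, Real.sq_sqrt (hq i).le]
  rw [h3]
  refine (Finset.sum_mul_sq_le_sq_mul_sq _ _ _).trans ?_
  simp only [sq_abs]
  have h4 : 0 ≤ ∑ i, (√(p i) - √(q i))^2 := Finset.sum_nonneg fun i _ => sq_nonneg _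
  nlinarith

set_option linter.unusedSectionVars false

section ent
open ProbabilityTheory
variable {X S ι : Type*} [MeasurableSpace X] [MeasurableSpace S] [Fintype ι] [Nonempty ι]
  [MeasurableSpace ι] [MeasurableSingletonClass ι]

/-- smoothed cell probabilities -/
noncomputable def cellQ (κ : Kernel X S) (c : X × S → ι) (i : ι) (x : X) : ℝ :=
  (κ x).real {v | c (x, v) = i} + 1 / (Fintype.card ι : ℝ)

/-- smoothed entropy -/
noncomputable def cellH (ρ : Measure X) (κ : Kernel X S) (c : X × S → ι) : ℝ :=
  ∫ x, ∑ i, cellQ κ c i x * (- Real.log (cellQ κ c i x)) ∂ρ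

variable (ρ : Measure X) [IsProbabilityMeasure ρ] (κ : Kernel X S) [IsMarkovKernel κ]

lemma cellQ_ge (c : X × S → ι) (i : ι) (x : X) :
    1 / (Fintype.card ι : ℝ) ≤ cellQ κ c i x := by
  simp [cellQ]

lemma cellQ_le (c : X × S → ι) (i : ι) (x : X) : cellQ κ c i x ≤ 2 := by
  have h1 : (κ x).real {v | c (x, v) = i} ≤ 1 := measureReal_le_one
  have h2 : 1 / (Fintype.card ι : ℝ) ≤ 1 := by
    rw [div_le_one (by exact_mod_cast Fintype.card_pos)]
    exact_mod_cast Fintype.card_pos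
  unfold cellQ; linarith

lemma cellQ_pos (c : X × S → ι) (i : ι) (x : X) : 0 < cellQ κ c i x :=
  lt_of_lt_of_le (by have : 0 < Fintype.card ι := Fintype.card_pos
                     positivity) (cellQ_ge κ c i x)

lemma cell_sum (μ : Measure S) [IsProbabilityMeasure μ] (c : S → ι) (hc : Measurable c) :
    ∑ i, μ.real {v | c v = i} = 1 := by
  have := sum_measureReal_preimage_singleton (μ := μ) (f := c) (Finset.univ)
    (fun y _ => hc (measurableSet_singleton y))
  simpa [Set.preimage] using this

lemma cellQ_sum {c : X × S → ι} (hc : Measurable c) (x : X) : ∑ i, cellQ κ c i x = 2 := by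
  unfold cellQ
  rw [Finset.sum_add_distrib, cell_sum (κ x) (fun v => c (x, v)) (hc.comp measurable_prodMk_left)]
  have : (Fintype.card ι : ℝ) ≠ 0 := by exact_mod_cast Fintype.card_ne_zero
  simp [this]
  norm_num

lemma measurable_cellQ {c : X × S → ι} (hc : Measurable c) (i : ι) :
    Measurable (cellQ κ c i) := by
  have h : MeasurableSet {p : X × S | c p = i} := hc (measurableSet_singleton i)
  have := (Kernel.measurable_kernel_prodMk_left (κ := κ) h).ennreal_toReal
  exact this.add_const _

lemma abs_log_cellQ (c : X × S → ι) (i : ι) (x : X) :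
    |Real.log (cellQ κ c i x)| ≤ Real.log 2 + Real.log (Fintype.card ι) := by
  have hN : (1:ℝ) ≤ Fintype.card ι := by exact_mod_cast Fintype.card_pos
  have h1 := Real.log_le_log (cellQ_pos κ c i x) (cellQ_le κ c i x)
  have h2 := Real.log_le_log (by positivity) (cellQ_ge κ c i x)
  rw [one_div, Real.log_inv] at h2
  have := Real.log_nonneg hN
  have := Real.log_pos (x := 2) (by norm_num)
  rw [abs_le]; constructor <;> linarith

lemma integrable_bdd {μ : Measure X} [IsFiniteMeasure μ] {f : X → ℝ} (hf : Measurable f) (C : ℝ) (h : ∀ x, |f x| ≤ C) :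
    Integrable f μ :=
  Integrable.of_bound hf.aestronglyMeasurable C (Eventually.of_forall fun x => h x)

lemma int1 {c c' : X × S → ι} (hc : Measurable c) (hc' : Measurable c') {T : X → X} (hT : Measurable T) (i : ι) :
    Integrable (fun x => cellQ κ c i x * (- Real.log (cellQ κ c' i (T x)))) ρ := by
  refine integrable_bdd ?_ (2 * (Real.log 2 + Real.log (Fintype.card ι))) ?_
  · exact (measurable_cellQ κ hc i).mul (((measurable_cellQ κ hc' i).comp hT).log.neg)
  · intro x
    rw [abs_mul, abs_neg, abs_of_pos (cellQ_pos κ c i x)]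
    exact mul_le_mul (cellQ_le _ _ _ _) (abs_log_cellQ _ _ _ _) (abs_nonneg _) (by norm_num)

lemma cellH_bd {c : X × S → ι} (hc : Measurable c) :
    -(2 * Real.log 2) ≤ cellH ρ κ c ∧ cellH ρ κ c ≤ 2 * Real.log (Fintype.card ι) := by
  have hI : Integrable (fun x => ∑ i, cellQ κ c i x * (- Real.log (cellQ κ c i x))) ρ :=
    integrable_finsetSum _ fun i _ => int1 ρ κ hc hc measurable_id i
  constructor
  · have : ∫ x, -(2 * Real.log 2) ∂ρ ≤ cellH ρ κ c := by
      refine integral_mono (integrable_const _) hI fun x => ?_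
      calc -(2 * Real.log 2) = ∑ i, cellQ κ c i x * (- Real.log 2) := by
            rw [← Finset.sum_mul, cellQ_sum κ hc]; ring
        _ ≤ _ := Finset.sum_le_sum fun i _ => mul_le_mul_of_nonneg_left
            (neg_le_neg (Real.log_le_log (cellQ_pos κ c i x) (cellQ_le κ c i x))) (cellQ_pos κ c i x).le
    simpa using this
  · have : cellH ρ κ c ≤ ∫ x, (2 * Real.log (Fintype.card ι)) ∂ρ := by
      refine integral_mono hI (integrable_const _) fun x => ?_
      calc _ ≤ ∑ i, cellQ κ c i x * (Real.log (Fintype.card ι)) := by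
            refine Finset.sum_le_sum fun i _ => mul_le_mul_of_nonneg_left ?_ (cellQ_pos κ c i x).le
            have hN : (0:ℝ) < Fintype.card ι := by exact_mod_cast Fintype.card_pos
            have h2 := Real.log_le_log (by positivity) (cellQ_ge κ c i x)
            rw [one_div, Real.log_inv] at h2
            linarith
        _ = _ := by rw [← Finset.sum_mul, cellQ_sum κ hc]
    simpa using this

lemma ent_step {T : X → X} (hT : Measurable T) (hTρ : ρ.map T = ρ) {b : X × S → S} (hb : Measurable b)
    (hinv : (ρ ⊗ₘ κ).map (fun p => (T p.1, b p)) = ρ ⊗ₘ κ)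
    {c : X × S → ι} (hc : Measurable c) :
    ∫ x, (∑ i, |cellQ κ (fun p => c (T p.1, b p)) i x - cellQ κ c i (T x)|)^2 ∂ρ ≤
      8 * (cellH ρ κ c - cellH ρ κ (fun p => c (T p.1, b p))) := by
  have hTh : Measurable (fun p : X × S => (T p.1, b p)) := (hT.comp measurable_fst).prodMk hb
  set c' : X × S → ι := fun p => c (T p.1, b p) with hc'd
  have hc' : Measurable c' := hc.comp hTh
  have key : ∀ i, ∫ x, cellQ κ c' i x * (- Real.log (cellQ κ c i (T x))) ∂ρ =
      ∫ x, cellQ κ c i x * (- Real.log (cellQ κ c i x)) ∂ρ := by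
    intro i
    set g : X → ℝ := fun x => - Real.log (cellQ κ c i x) with hg
    have hgm : Measurable g := (measurable_cellQ κ hc i).log.neg
    have hgb : ∀ x, |g x| ≤ Real.log 2 + Real.log (Fintype.card ι) := fun x => by
      rw [hg, abs_neg]; exact abs_log_cellQ _ _ _ _
    have hm : MeasurableSet {p : X × S | c p = i} := hc (measurableSet_singleton i)
    let F : X × S → ℝ := Set.indicator {p : X × S | c p = i} (fun p => g p.1)
    have hF : Measurable F := (hgm.comp measurable_fst).indicator hm
    have hFb : ∀ p, |F p| ≤ Real.log 2 + Real.log (Fintype.card ι) := fun p => by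
      refine le_trans ?_ (hgb p.1)
      exact norm_indicator_le_norm_self (fun p : X × S => g p.1) p
    have e1 : ∫ p, F (T p.1, b p) ∂(ρ ⊗ₘ κ) = ∫ p, F p ∂(ρ ⊗ₘ κ) := by
      conv_rhs => rw [← hinv]
      rw [integral_map hTh.aemeasurable hF.aestronglyMeasurable]
    rw [Measure.integral_compProd (f := fun p : X × S => F (T p.1, b p))
        (integrable_bdd (hF.comp hTh) _ fun p => hFb _),
      Measure.integral_compProd (integrable_bdd hF _ hFb)] at e1
    have e2 : ∀ x, ∫ v, F (x, v) ∂(κ x) = (κ x).real {v | c (x, v) = i} * g x := by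
      intro x
      have : (fun v => F (x, v)) = Set.indicator {v | c (x, v) = i} (fun _ => g x) := by
        ext v; simp [F, Set.indicator]
      have hm2 : MeasurableSet {v | c (x, v) = i} := measurable_prodMk_left hm
      rw [this, integral_indicator_const _ hm2, smul_eq_mul]
    have e3 : ∀ x, ∫ v, F (T x, b (x, v)) ∂(κ x) = (κ x).real {v | c' (x, v) = i} * g (T x) := by
      intro x
      have : (fun v => F (T x, b (x, v))) = Set.indicator {v | c' (x, v) = i} (fun _ => g (T x)) := by
        ext v; simp [F, Set.indicator, c']
      have hm2 : MeasurableSet {v | c' (x, v) = i} := measurable_prodMk_left (hc' (measurableSet_singleton i))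
      rw [this, integral_indicator_const _ hm2, smul_eq_mul]
    simp only [e2, e3] at e1
    have e4 : ∫ x, g (T x) ∂ρ = ∫ x, g x ∂ρ := by
      conv_rhs => rw [← hTρ]
      rw [integral_map hT.aemeasurable hgm.aestronglyMeasurable]
    have r1 : ∀ x, cellQ κ c' i x * g (T x) = (κ x).real {v | c' (x, v) = i} * g (T x) + 1 / (Fintype.card ι : ℝ) * g (T x) := fun x => by
      unfold cellQ; ring
    have r2 : ∀ x, cellQ κ c i x * g x = (κ x).real {v | c (x, v) = i} * g x + 1 / (Fintype.card ι : ℝ) * g x := fun x => by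
      unfold cellQ; ring
    have i1 : Integrable (fun x => 1 / (Fintype.card ι : ℝ) * g x) ρ := (integrable_bdd hgm _ hgb).const_mul _
    have i2 : Integrable (fun x => 1 / (Fintype.card ι : ℝ) * g (T x)) ρ :=
      (integrable_bdd (hgm.comp hT) _ fun x => hgb (T x)).const_mul _
    have i3 : Integrable (fun x => (κ x).real {v | c (x, v) = i} * g x) ρ := by
      have := (int1 ρ κ hc hc measurable_id i).sub i1
      refine this.congr (Eventually.of_forall fun x => ?_)
      simp only [Pi.sub_apply, id]
      linarith [r2 x]
    have i4 : Integrable (fun x => (κ x).real {v | c' (x, v) = i} * g (T x)) ρ := by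
      have := (int1 ρ κ hc' hc hT i).sub i2
      refine this.congr (Eventually.of_forall fun x => ?_)
      simp only [Pi.sub_apply]
      linarith [r1 x]
    change ∫ x, cellQ κ c' i x * g (T x) ∂ρ = ∫ x, cellQ κ c i x * g x ∂ρ
    simp only [r1, r2]
    rw [integral_add i4 i2, integral_add i3 i1, integral_const_mul, integral_const_mul, e4, e1]
  have I1 : ∀ i, Integrable (fun x => cellQ κ c' i x * (- Real.log (cellQ κ c i (T x)))) ρ :=
    int1 ρ κ hc' hc hT
  have I2 : ∀ i, Integrable (fun x => cellQ κ c' i x * (- Real.log (cellQ κ c' i x))) ρ :=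
    int1 ρ κ hc' hc' measurable_id
  have I3 : ∀ i, Integrable (fun x => cellQ κ c i x * (- Real.log (cellQ κ c i x))) ρ :=
    int1 ρ κ hc hc measurable_id
  have E1 : cellH ρ κ c = ∫ x, ∑ i, cellQ κ c' i x * (- Real.log (cellQ κ c i (T x))) ∂ρ := by
    unfold cellH
    rw [integral_finsetSum _ fun i _ => I3 i, integral_finsetSum _ fun i _ => I1 i]
    exact Finset.sum_congr rfl fun i _ => (key i).symm
  have J1 := integrable_finsetSum Finset.univ fun i _ => I1 i
  have J2 := integrable_finsetSum Finset.univ fun i _ => I2 i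
  rw [E1]
  unfold cellH
  rw [← integral_sub J1 J2, ← integral_const_mul]
  refine integral_mono_of_nonneg (Eventually.of_forall fun x => sq_nonneg _) ((J1.sub J2).const_mul _)
    (Eventually.of_forall fun x => ?_)
  refine (aux_sum _ _ (fun i => cellQ_pos κ c' i x) (fun i => cellQ_pos κ c i (T x))
    (cellQ_sum κ hc' x) (cellQ_sum κ hc (T x))).trans (le_of_eq ?_)
  simp only [← Finset.sum_sub_distrib]
  congr 1
  refine Finset.sum_congr rfl fun i _ => ?_
  ring

lemma test_le (μ ν : Measure S) [IsProbabilityMeasure μ] [IsProbabilityMeasure ν] {c : S → ι}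
    (hc : Measurable c) {f : S → ℝ} (hf : Measurable f) {M ω : ℝ} (hM : ∀ v, |f v| ≤ M) (hM0 : 0 ≤ M)
    (hω : ∀ v w, c v = c w → |f v - f w| ≤ ω) :
    |∫ v, f v ∂μ - ∫ v, f v ∂ν| ≤ M * ∑ i, |μ.real {v | c v = i} - ν.real {v | c v = i}| + 2 * ω := by
  classical
  let φ : ι → ℝ := fun i => if h : ∃ v, c v = i then f h.choose else 0
  have hφM : ∀ i, |φ i| ≤ M := by
    intro i; simp only [φ]; split_ifs
    · exact hM _
    · simpa using hM0
  have hφ : ∀ v, |f v - φ (c v)| ≤ ω := by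
    intro v
    have h : ∃ w, c w = c v := ⟨v, rfl⟩
    simp only [φ, dif_pos h]
    exact hω _ _ h.choose_spec.symm
  have hφm : Measurable φ := measurable_of_finite φ
  have A : ∀ (m : Measure S) [IsProbabilityMeasure m],
      |∫ v, f v ∂m - ∑ i, φ i * m.real {v | c v = i}| ≤ ω := by
    intro m _
    have e : ∑ i, φ i * m.real {v | c v = i} = ∫ v, φ (c v) ∂m := by
      rw [← integral_map (f := φ) hc.aemeasurable hφm.aestronglyMeasurable]
      have := Measure.isProbabilityMeasure_map (μ := m) hc.aemeasurable
      rw [integral_fintype (integrable_bdd hφm M hφM)]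
      refine Finset.sum_congr rfl fun i _ => ?_
      rw [map_measureReal_apply hc (measurableSet_singleton i), smul_eq_mul, mul_comm]; rfl
    rw [e, ← integral_sub (integrable_bdd hf M hM) (integrable_bdd (f := fun v => φ (c v)) (hφm.comp hc) M fun v => hφM _)]
    have := norm_integral_le_of_norm_le_const (μ := m) (f := fun v => f v - φ (c v)) (C := ω) (Eventually.of_forall hφ)
    simpa using this
  have B : |∑ i, φ i * μ.real {v | c v = i} - ∑ i, φ i * ν.real {v | c v = i}| ≤
      M * ∑ i, |μ.real {v | c v = i} - ν.real {v | c v = i}| := by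
    rw [← Finset.sum_sub_distrib, Finset.mul_sum]
    refine (Finset.abs_sum_le_sum_abs _ _).trans (Finset.sum_le_sum fun i _ => ?_)
    rw [← mul_sub, abs_mul]
    exact mul_le_mul_of_nonneg_right (hφM i) (abs_nonneg _)
  have a1 := abs_le.1 (A μ)
  have a2 := abs_le.1 (A ν)
  have a3 := abs_le.1 B
  rw [abs_le]; constructor <;> linarith [a1.1, a1.2, a2.1, a2.2, a3.1, a3.2]
end ent

lemma eucl_norm_le_sum {d : ℕ} (z : EuclideanSpace ℝ (Fin d)) : ‖z‖ ≤ ∑ i, |z i| := by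
  rw [EuclideanSpace.norm_eq]
  apply Real.sqrt_le_iff.2
  refine ⟨Finset.sum_nonneg fun i _ => abs_nonneg _, ?_⟩
  exact Finset.sum_sq_le_sq_sum_of_nonneg (fun i _ => abs_nonneg (z i))

lemma eucl_lin_apply {d : ℕ} (M : Matrix (Fin d) (Fin d) ℝ) (z : EuclideanSpace ℝ (Fin d)) (i : Fin d) :
    Matrix.toEuclideanLin M z i = ∑ j, M i j * z j := by
  simp [Matrix.toLpLin_apply, Matrix.mulVec, dotProduct]

lemma eucl_lin_mul {d : ℕ} (M N : Matrix (Fin d) (Fin d) ℝ) (z : EuclideanSpace ℝ (Fin d)) :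
    Matrix.toEuclideanLin (M * N) z = Matrix.toEuclideanLin M (Matrix.toEuclideanLin N z) := by
  simp [Matrix.toLpLin_apply, Matrix.mulVec_mulVec]

lemma eucl_lin_adj {d : ℕ} {M : Matrix (Fin d) (Fin d) ℝ} (h : M.det = 1) (z : EuclideanSpace ℝ (Fin d)) :
    Matrix.toEuclideanLin M.adjugate (Matrix.toEuclideanLin M z) = z := by
  rw [← eucl_lin_mul, Matrix.adjugate_mul, h]
  simp [Matrix.toLpLin_apply]

lemma eucl_lin_ne {d : ℕ} {M : Matrix (Fin d) (Fin d) ℝ} (h : M.det = 1) {z : EuclideanSpace ℝ (Fin d)}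
    (hz : z ≠ 0) : Matrix.toEuclideanLin M z ≠ 0 := by
  intro h0
  apply hz
  rw [← eucl_lin_adj h z, h0, map_zero]

lemma sph_ne {d : ℕ} (v : Metric.sphere (0 : EuclideanSpace ℝ (Fin d)) 1) :
    (v : EuclideanSpace ℝ (Fin d)) ≠ 0 := by
  intro h
  have := norm_eq_of_mem_sphere v
  rw [h] at this; simp at this

lemma projAct_coe {d : ℕ} {M : Matrix (Fin d) (Fin d) ℝ} (h : M.det = 1)
    (v : Metric.sphere (0 : EuclideanSpace ℝ (Fin d)) 1) :
    (projAct M v : EuclideanSpace ℝ (Fin d)) =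
      ‖Matrix.toEuclideanLin M (v : EuclideanSpace ℝ (Fin d))‖⁻¹ •
        Matrix.toEuclideanLin M (v : EuclideanSpace ℝ (Fin d)) := by
  have h0 := eucl_lin_ne h (sph_ne v)
  exact congrArg Subtype.val (dif_neg h0)

lemma projAct_mul {d : ℕ} {M N : Matrix (Fin d) (Fin d) ℝ} (hM : M.det = 1) (hN : N.det = 1)
    (v : Metric.sphere (0 : EuclideanSpace ℝ (Fin d)) 1) :
    projAct (M * N) v = projAct M (projAct N v) := by
  apply Subtype.ext
  rw [projAct_coe (by rw [Matrix.det_mul, hM, hN, one_mul]), projAct_coe hM, projAct_coe hN,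
    map_smul, norm_smul, eucl_lin_mul, norm_inv, norm_norm, smul_smul]
  congr 1
  have h1 : ‖Matrix.toEuclideanLin N (v : EuclideanSpace ℝ (Fin d))‖ ≠ 0 :=
    norm_ne_zero_iff.2 (eucl_lin_ne hN (sph_ne v))
  field_simp

lemma projAct_one {d : ℕ} (v : Metric.sphere (0 : EuclideanSpace ℝ (Fin d)) 1) :
    projAct (1 : Matrix (Fin d) (Fin d) ℝ) v = v := by
  apply Subtype.ext
  rw [projAct_coe (by simp)]
  simp [Matrix.toLpLin_apply]

lemma lin_le {d : ℕ} (M : Matrix (Fin d) (Fin d) ℝ) (z : EuclideanSpace ℝ (Fin d)) :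
    ‖Matrix.toEuclideanLin M z‖ ≤ matOpNorm M * ‖z‖ :=
  (LinearMap.toContinuousLinearMap (Matrix.toEuclideanLin M)).le_opNorm z

lemma entry_le {d : ℕ} (M : Matrix (Fin d) (Fin d) ℝ) (i j : Fin d) : |M i j| ≤ matOpNorm M := by
  have h := lin_le M (EuclideanSpace.single j 1)
  rw [EuclideanSpace.norm_single, norm_one, mul_one] at h
  refine le_trans ?_ h
  have h2 := PiLp.norm_apply_le (Matrix.toEuclideanLin M (EuclideanSpace.single j 1)) i
  rw [eucl_lin_apply] at h2
  simpa [PiLp.single_apply] using h2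

lemma adj_le {d : ℕ} {M : Matrix (Fin d) (Fin d) ℝ} {R : ℝ} (hR : 1 ≤ R) (hM : matOpNorm M ≤ R)
    (i j : Fin d) : |M.adjugate i j| ≤ (d.factorial : ℝ) * R ^ d := by
  rw [Matrix.adjugate_apply]
  have := Matrix.det_le (A := M.updateRow j (Pi.single i 1)) (abv := AbsoluteValue.abs) (x := R) ?_
  · simpa using this
  · intro a b
    rw [AbsoluteValue.abs_apply, Matrix.updateRow_apply]
    split_ifs
    · rw [Pi.single_apply]; split_ifs <;> simp <;> linarith
    · exact (entry_le M a b).trans hM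

/-- distortion constant -/
noncomputable def distC (d : ℕ) : ℝ := 2 * ((d : ℝ) * ((d : ℝ) * (d.factorial : ℝ)))

lemma adj_lin_le {d : ℕ} {M : Matrix (Fin d) (Fin d) ℝ} {R : ℝ} (hR : 1 ≤ R) (hM : matOpNorm M ≤ R)
    (z : EuclideanSpace ℝ (Fin d)) :
    ‖Matrix.toEuclideanLin M.adjugate z‖ ≤ (d : ℝ) * ((d : ℝ) * ((d.factorial : ℝ) * R ^ d * ‖z‖)) := by
  refine (eucl_norm_le_sum _).trans ?_
  calc _ ≤ ∑ i : Fin d, ∑ j : Fin d, ((d.factorial : ℝ) * R ^ d * ‖z‖) := by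
        refine Finset.sum_le_sum fun i _ => ?_
        rw [eucl_lin_apply]
        refine (Finset.abs_sum_le_sum_abs _ _).trans (Finset.sum_le_sum fun j _ => ?_)
        rw [abs_mul]
        exact mul_le_mul (adj_le hR hM i j) (PiLp.norm_apply_le z j) (abs_nonneg _) (by positivity)
    _ = _ := by simp

lemma projAct_dist {d : ℕ} {M : Matrix (Fin d) (Fin d) ℝ} (h : M.det = 1) {R : ℝ} (hR : 1 ≤ R)
    (hM : matOpNorm M ≤ R) (v w : Metric.sphere (0 : EuclideanSpace ℝ (Fin d)) 1) :
    dist v w ≤ distC d * R ^ (d + 1) * dist (projAct M v) (projAct M w) := by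
  rw [Subtype.dist_eq, Subtype.dist_eq, dist_eq_norm, dist_eq_norm, projAct_coe h, projAct_coe h]
  set V : EuclideanSpace ℝ (Fin d) := (v : EuclideanSpace ℝ (Fin d))
  set W : EuclideanSpace ℝ (Fin d) := (w : EuclideanSpace ℝ (Fin d))
  have hV : ‖V‖ = 1 := norm_eq_of_mem_sphere v
  have hW : ‖W‖ = 1 := norm_eq_of_mem_sphere w
  set a := ‖Matrix.toEuclideanLin M V‖ with ha
  set b := ‖Matrix.toEuclideanLin M W‖ with hb
  have ha0 : 0 < a := norm_pos_iff.2 (eucl_lin_ne h (sph_ne v))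
  have hb0 : 0 < b := norm_pos_iff.2 (eucl_lin_ne h (sph_ne w))
  have haR : a ≤ R := by
    have := lin_le M V
    rw [hV, mul_one] at this
    exact this.trans hM
  set D := ‖a⁻¹ • Matrix.toEuclideanLin M V - b⁻¹ • Matrix.toEuclideanLin M W‖ with hD
  have h1 : ‖a⁻¹ • V - b⁻¹ • W‖ ≤ (d : ℝ) * ((d : ℝ) * ((d.factorial : ℝ) * R ^ d * D)) := by
    have := adj_lin_le hR hM (a⁻¹ • Matrix.toEuclideanLin M V - b⁻¹ • Matrix.toEuclideanLin M W)
    rwa [map_sub, map_smul, map_smul, eucl_lin_adj h, eucl_lin_adj h] at this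
  set δ := ‖a⁻¹ • V - b⁻¹ • W‖ with hδ
  have h2 : |a⁻¹ - b⁻¹| ≤ δ := by
    have := abs_norm_sub_norm_le (a⁻¹ • V) (b⁻¹ • W)
    rwa [norm_smul, norm_smul, hV, hW, mul_one, mul_one, norm_inv, norm_inv, Real.norm_of_nonneg ha0.le,
      Real.norm_of_nonneg hb0.le] at this
  have h3 : V - W = a • (a⁻¹ • V - b⁻¹ • W) - (a * (a⁻¹ - b⁻¹)) • W := by
    rw [smul_sub, smul_smul, smul_smul, mul_inv_cancel₀ ha0.ne', mul_sub, mul_inv_cancel₀ ha0.ne', sub_smul]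
    simp
  have h4 : ‖V - W‖ ≤ a * δ + a * δ := by
    rw [h3]
    refine (norm_sub_le _ _).trans (add_le_add ?_ ?_)
    · rw [norm_smul, Real.norm_of_nonneg ha0.le]
    · rw [norm_smul, hW, mul_one, norm_mul, Real.norm_of_nonneg ha0.le]
      exact mul_le_mul_of_nonneg_left h2 ha0.le
  have hδ0 : 0 ≤ δ := norm_nonneg _
  calc ‖V - W‖ ≤ a * δ + a * δ := h4
    _ ≤ 2 * (R * δ) := by nlinarith
    _ ≤ 2 * (R * ((d : ℝ) * ((d : ℝ) * ((d.factorial : ℝ) * R ^ d * D)))) := by gcongr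
    _ = _ := by unfold distC; ring

lemma measurable_projAct {d : ℕ} {Y : Type*} [MeasurableSpace Y] {B : Y → Matrix (Fin d) (Fin d) ℝ}
    (hB : ∀ i j, Measurable fun x => B x i j) (hdet : ∀ x, (B x).det = 1)
    {g : Y → Metric.sphere (0 : EuclideanSpace ℝ (Fin d)) 1} (hg : Measurable g) :
    Measurable fun y => projAct (B y) (g y) := by
  have hgi : ∀ i, Measurable fun y => (g y : EuclideanSpace ℝ (Fin d)) i := fun i =>
    (measurable_pi_apply i).comp ((WithLp.measurable_ofLp 2 (Fin d → ℝ)).comp (measurable_subtype_coe.comp hg))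
  have h1 : Measurable fun y => Matrix.toEuclideanLin (B y) (g y : EuclideanSpace ℝ (Fin d)) := by
    have : (fun y => Matrix.toEuclideanLin (B y) (g y : EuclideanSpace ℝ (Fin d))) =
        fun y => WithLp.toLp 2 (fun i => ∑ j, B y i j * (g y : EuclideanSpace ℝ (Fin d)) j) := by
      ext y i
      rw [eucl_lin_apply]
    rw [this]
    refine (WithLp.measurable_toLp 2 (Fin d → ℝ)).comp (measurable_pi_iff.2 fun i => ?_)
    exact Finset.measurable_sum _ fun j _ => (hB i j).mul (hgi j)
  refine Measurable.subtype_mk (f := fun y => (projAct (B y) (g y) : EuclideanSpace ℝ (Fin d))) (h := fun y => (projAct (B y) (g y)).2) ?_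
  have : (fun y => (projAct (B y) (g y) : EuclideanSpace ℝ (Fin d))) = fun y =>
      ‖Matrix.toEuclideanLin (B y) (g y : EuclideanSpace ℝ (Fin d))‖⁻¹ •
        Matrix.toEuclideanLin (B y) (g y : EuclideanSpace ℝ (Fin d)) := by
    ext1 y; exact projAct_coe (hdet y) _
  rw [this]
  exact h1.norm.inv.smul h1

lemma measurable_matOpNorm {d : ℕ} {Y : Type*} [MeasurableSpace Y] {B : Y → Matrix (Fin d) (Fin d) ℝ}
    (hB : ∀ i j, Measurable fun x => B x i j) : Measurable fun y => matOpNorm (B y) := by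
  let L : (Fin d → Fin d → ℝ) →ₗ[ℝ] (EuclideanSpace ℝ (Fin d) →L[ℝ] EuclideanSpace ℝ (Fin d)) :=
    { toFun := fun M => LinearMap.toContinuousLinearMap (Matrix.toEuclideanLin (Matrix.of M))
      map_add' := fun a b => by rw [← Matrix.of_add_of, map_add, map_add]
      map_smul' := fun a b => by rw [← Matrix.smul_of, map_smul, map_smul]; rfl }
  have hL : Continuous fun M => ‖L M‖ := (L.continuous_of_finiteDimensional).norm
  have hm : Measurable fun y => (fun i j => B y i j : Fin d → Fin d → ℝ) :=
    measurable_pi_iff.2 fun i => measurable_pi_iff.2 fun j => hB i j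
  exact hL.measurable.comp hm

/-- cube cell of a point of the sphere -/
noncomputable def cubeCell {d : ℕ} (K : ℕ) (v : Metric.sphere (0 : EuclideanSpace ℝ (Fin d)) 1) :
    Fin d → Fin (2 * K + 1) :=
  fun i => Fin.ofNat (2 * K + 1) ⌊(K : ℝ) * ((v : EuclideanSpace ℝ (Fin d)) i + 1)⌋₊

lemma measurable_cubeCell {d : ℕ} (K : ℕ) : Measurable (cubeCell (d := d) K) := by
  refine measurable_pi_iff.2 fun i => ?_
  have hgi : Measurable fun v : Metric.sphere (0 : EuclideanSpace ℝ (Fin d)) 1 => (v : EuclideanSpace ℝ (Fin d)) i :=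
    (measurable_pi_apply i).comp ((WithLp.measurable_ofLp 2 (Fin d → ℝ)).comp measurable_subtype_coe)
  exact (measurable_from_nat (f := Fin.ofNat (2 * K + 1))).comp
    (Nat.measurable_floor.comp ((hgi.add_const 1).const_mul _))

lemma cubeCell_dist {d : ℕ} {K : ℕ} (hK : 0 < K) {v w : Metric.sphere (0 : EuclideanSpace ℝ (Fin d)) 1}
    (h : cubeCell K v = cubeCell K w) : dist v w ≤ d / (K : ℝ) := by
  rw [Subtype.dist_eq, dist_eq_norm]
  refine (eucl_norm_le_sum _).trans ?_
  have hb : ∀ (v : Metric.sphere (0 : EuclideanSpace ℝ (Fin d)) 1) (i : Fin d),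
      0 ≤ (K : ℝ) * ((v : EuclideanSpace ℝ (Fin d)) i + 1) ∧
      ⌊(K : ℝ) * ((v : EuclideanSpace ℝ (Fin d)) i + 1)⌋₊ < 2 * K + 1 := by
    intro v i
    have h1 := PiLp.norm_apply_le (v : EuclideanSpace ℝ (Fin d)) i
    rw [norm_eq_of_mem_sphere v, Real.norm_eq_abs, abs_le] at h1
    refine ⟨mul_nonneg (by positivity) (by linarith), ?_⟩
    rw [Nat.lt_succ_iff]
    apply Nat.floor_le_of_le
    push_cast
    have : (0:ℝ) ≤ K := by positivity
    nlinarith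
  calc _ ≤ ∑ i : Fin d, 1 / (K : ℝ) := by
        refine Finset.sum_le_sum fun i _ => ?_
        have h1 := congrArg Fin.val (congrFun h i)
        simp only [cubeCell, Fin.ofNat] at h1
        rw [Nat.mod_eq_of_lt (hb v i).2, Nat.mod_eq_of_lt (hb w i).2] at h1
        have a1 := Nat.floor_le (hb v i).1
        have a2 := Nat.lt_floor_add_one ((K : ℝ) * ((v : EuclideanSpace ℝ (Fin d)) i + 1))
        have b1 := Nat.floor_le (hb w i).1
        have b2 := Nat.lt_floor_add_one ((K : ℝ) * ((w : EuclideanSpace ℝ (Fin d)) i + 1))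
        rw [h1] at a1 a2
        have hK' : (0:ℝ) < K := by exact_mod_cast hK
        rw [le_div_iff₀ hK', PiLp.sub_apply]
        rw [show ∀ t : ℝ, |t| * (K : ℝ) = |t * K| from fun t => by rw [abs_mul, abs_of_pos hK'], abs_le]
        constructor <;> nlinarith
    _ = _ := by simp; ring

section mainproof
open ProbabilityTheory

variable {X : Type} [MeasurableSpace X] (ρ : Measure X) [IsProbabilityMeasure ρ] {d : ℕ}
  (κ : Kernel X (Metric.sphere (0 : EuclideanSpace ℝ (Fin d)) 1)) [IsMarkovKernel κ]

/-- cells pulled back by the `j`-th iterate -/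
noncomputable def cellJ (Bn : ℕ → X → Matrix (Fin d) (Fin d) ℝ) (K j : ℕ)
    (p : X × Metric.sphere (0 : EuclideanSpace ℝ (Fin d)) 1) : Fin d → Fin (2 * K + 1) :=
  cubeCell K (projAct (Bn j p.1) p.2)

/-- defect of invariance for the test function `f` -/
noncomputable def defect (T : X → X) (B : X → Matrix (Fin d) (Fin d) ℝ)
    (f : C(Metric.sphere (0 : EuclideanSpace ℝ (Fin d)) 1, ℝ)) (x : X) : ℝ :=
  ∫ v, f (projAct (B x) v) ∂(κ x) - ∫ v, f v ∂(κ (T x))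

lemma step_pt {T : X → X} {B : X → Matrix (Fin d) (Fin d) ℝ}
    (hBmeas : ∀ i j, Measurable fun x => B x i j) (hBdet : ∀ x, (B x).det = 1)
    {Bn : ℕ → X → Matrix (Fin d) (Fin d) ℝ} (hBnm : ∀ n i j, Measurable fun x => Bn n x i j)
    (hBnd : ∀ n x, (Bn n x).det = 1) (hBn : ∀ n x, Bn (n + 1) x = Bn n (T x) * B x)
    (f : C(Metric.sphere (0 : EuclideanSpace ℝ (Fin d)) 1, ℝ)) {M : ℝ} (hM : ∀ v, |f v| ≤ M) (hM0 : 0 ≤ M)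
    {K : ℕ} (hK : 0 < K) {R ω : ℝ} (hR : 1 ≤ R) (hω0 : 0 ≤ ω)
    (hω : ∀ v w, dist v w ≤ distC d * R ^ (d + 1) * (d / (K : ℝ)) → |f v - f w| ≤ ω) (j : ℕ) (x : X)
    (hx : matOpNorm (Bn j (T x)) ≤ R) :
    (defect κ T B f x) ^ 2 ≤ 2 * M ^ 2 * (∑ i, |cellQ κ (cellJ Bn K (j + 1)) i x -
      cellQ κ (cellJ Bn K j) i (T x)|) ^ 2 + 8 * ω ^ 2 := by
  have hb : Measurable (projAct (B x)) :=
    measurable_projAct (B := fun _ : Metric.sphere (0 : EuclideanSpace ℝ (Fin d)) 1 => B x) (fun i j => measurable_const) (fun _ => hBdet x) measurable_id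
  have hA : Measurable (projAct (Bn j (T x))) :=
    measurable_projAct (B := fun _ : Metric.sphere (0 : EuclideanSpace ℝ (Fin d)) 1 => Bn j (T x)) (fun i j => measurable_const) (fun _ => hBnd j _) measurable_id
  let c : Metric.sphere (0 : EuclideanSpace ℝ (Fin d)) 1 → (Fin d → Fin (2 * K + 1)) := fun v => cubeCell K (projAct (Bn j (T x)) v)
  have hc : Measurable c := (measurable_cubeCell K).comp hA
  have hμ := Measure.isProbabilityMeasure_map (μ := κ x) hb.aemeasurable
  have t := test_le ((κ x).map (projAct (B x))) (κ (T x)) hc f.continuous.measurable hM hM0 (ω := ω) (by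
    intro v w hvw
    apply hω
    refine (projAct_dist (hBnd j (T x)) hR hx v w).trans ?_
    have hC : 0 ≤ distC d * R ^ (d + 1) := by unfold distC; positivity
    exact mul_le_mul_of_nonneg_left (cubeCell_dist hK hvw) hC)
  rw [integral_map hb.aemeasurable f.continuous.measurable.aestronglyMeasurable] at t
  have e : ∀ i, |((κ x).map (projAct (B x))).real {v | c v = i} - (κ (T x)).real {v | c v = i}| =
      |cellQ κ (cellJ Bn K (j + 1)) i x - cellQ κ (cellJ Bn K j) i (T x)| := by
    intro i
    have hm : MeasurableSet {v | c v = i} := hc (measurableSet_singleton i)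
    rw [map_measureReal_apply hb hm]
    have : projAct (B x) ⁻¹' {v | c v = i} = {v | cellJ Bn K (j + 1) (x, v) = i} := by
      ext v
      simp only [Set.mem_preimage, Set.mem_setOf_eq, c, cellJ]
      rw [hBn, projAct_mul (hBnd j _) (hBdet x)]
    rw [this]
    unfold cellQ
    congr 1
    simp only [c, cellJ]
    ring
  simp only [e] at t
  change |defect κ T B f x| ≤ _ at t
  set s := ∑ i, |cellQ κ (cellJ Bn K (j + 1)) i x - cellQ κ (cellJ Bn K j) i (T x)|
  have h1 : (defect κ T B f x) ^ 2 ≤ (M * s + 2 * ω) ^ 2 := by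
    rw [← sq_abs]
    exact pow_le_pow_left₀ (abs_nonneg _) t 2
  nlinarith [sq_nonneg (M * s - 2 * ω)]

lemma defect_abs {T : X → X} {B : X → Matrix (Fin d) (Fin d) ℝ}
    (f : C(Metric.sphere (0 : EuclideanSpace ℝ (Fin d)) 1, ℝ)) {M : ℝ} (hM : ∀ v, |f v| ≤ M) (x : X) :
    |defect κ T B f x| ≤ 2 * M := by
  have h1 := norm_integral_le_of_norm_le_const (μ := κ x) (f := fun v => f (projAct (B x) v)) (C := M)
    (Eventually.of_forall fun v => hM _)
  have h2 := norm_integral_le_of_norm_le_const (μ := κ (T x)) (f := fun v => f v) (C := M)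
    (Eventually.of_forall fun v => hM _)
  simp only [probReal_univ, mul_one, Real.norm_eq_abs] at h1 h2
  unfold defect
  refine (abs_sub _ _).trans ?_
  linarith

lemma step_int {T : X → X} (hT : Measurable T) (hTρ : ρ.map T = ρ) {B : X → Matrix (Fin d) (Fin d) ℝ}
    (hBmeas : ∀ i j, Measurable fun x => B x i j) (hBdet : ∀ x, (B x).det = 1)
    (hinv : (ρ ⊗ₘ κ).map (fun p => (T p.1, projAct (B p.1) p.2)) = ρ ⊗ₘ κ)
    {Bn : ℕ → X → Matrix (Fin d) (Fin d) ℝ} (hBnm : ∀ n i j, Measurable fun x => Bn n x i j)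
    (hBnd : ∀ n x, (Bn n x).det = 1) (hBn : ∀ n x, Bn (n + 1) x = Bn n (T x) * B x)
    (f : C(Metric.sphere (0 : EuclideanSpace ℝ (Fin d)) 1, ℝ)) {M : ℝ} (hM : ∀ v, |f v| ≤ M) (hM0 : 0 ≤ M)
    {K : ℕ} (hK : 0 < K) {R ω : ℝ} (hR : 1 ≤ R) (hω0 : 0 ≤ ω)
    (hω : ∀ v w, dist v w ≤ distC d * R ^ (d + 1) * (d / (K : ℝ)) → |f v - f w| ≤ ω) (j : ℕ) :
    ∫ x, (defect κ T B f x) ^ 2 ∂ρ ≤ 4 * M ^ 2 * ρ.real {y | R < matOpNorm (Bn j y)} +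
      16 * M ^ 2 * (cellH ρ κ (cellJ Bn K j) - cellH ρ κ (cellJ Bn K (j + 1))) + 8 * ω ^ 2 := by
  have hb : Measurable (fun p : X × Metric.sphere (0 : EuclideanSpace ℝ (Fin d)) 1 => projAct (B p.1) p.2) :=
    measurable_projAct (fun i j => (hBmeas i j).comp measurable_fst) (fun p => hBdet p.1) measurable_snd
  have hcm : ∀ j, Measurable (cellJ Bn K j) := fun j => (measurable_cubeCell K).comp
    (measurable_projAct (fun i k => (hBnm j i k).comp measurable_fst) (fun p => hBnd j p.1) measurable_snd)
  have hcs : (fun p : X × Metric.sphere (0 : EuclideanSpace ℝ (Fin d)) 1 =>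
      cellJ Bn K j (T p.1, projAct (B p.1) p.2)) = cellJ Bn K (j + 1) := by
    ext1 p
    simp only [cellJ]
    rw [hBn, projAct_mul (hBnd j _) (hBdet _)]
  have E := ent_step ρ κ hT hTρ hb hinv (hcm j)
  rw [hcs] at E
  set s : X → ℝ := fun x => ∑ i, |cellQ κ (cellJ Bn K (j + 1)) i x - cellQ κ (cellJ Bn K j) i (T x)| with hs
  have hsm : Measurable s := Finset.measurable_sum _ fun i _ =>
    ((measurable_cellQ κ (hcm (j+1)) i).sub ((measurable_cellQ κ (hcm j) i).comp hT)).abs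
  have hsb : ∀ x, |s x ^ 2| ≤ 16 := by
    intro x
    have h0 : 0 ≤ s x := Finset.sum_nonneg fun i _ => abs_nonneg _
    have h4 : s x ≤ 4 := by
      calc s x ≤ ∑ i, (cellQ κ (cellJ Bn K (j + 1)) i x + cellQ κ (cellJ Bn K j) i (T x)) := by
            refine Finset.sum_le_sum fun i _ => ?_
            have h1 := cellQ_pos κ (cellJ Bn K (j + 1)) i x
            have h2 := cellQ_pos κ (cellJ Bn K j) i (T x)
            rw [abs_le]; constructor <;> linarith
        _ = 4 := by rw [Finset.sum_add_distrib, cellQ_sum κ (hcm _), cellQ_sum κ (hcm _)]; norm_num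
    rw [abs_of_nonneg (sq_nonneg _)]
    nlinarith
  have hsi : Integrable (fun x => s x ^ 2) ρ := integrable_bdd (hsm.pow_const 2) 16 hsb
  let bad : Set X := {y | R < matOpNorm (Bn j y)}
  have hbad : MeasurableSet bad := measurableSet_lt measurable_const (measurable_matOpNorm (hBnm j))
  have hTbad : MeasurableSet (T ⁻¹' bad) := hT hbad
  have hTb : ρ.real (T ⁻¹' bad) = ρ.real bad := by
    conv_rhs => rw [← hTρ, map_measureReal_apply hT hbad]
  have i1 : Integrable (fun x => 4 * M ^ 2 * (T ⁻¹' bad).indicator (fun _ => (1:ℝ)) x) ρ :=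
    ((integrable_const (1:ℝ)).indicator hTbad).const_mul _
  have i2 : Integrable (fun x => 2 * M ^ 2 * s x ^ 2) ρ := hsi.const_mul _
  have key : ∫ x, (defect κ T B f x) ^ 2 ∂ρ ≤
      ∫ x, (4 * M ^ 2 * (T ⁻¹' bad).indicator (fun _ => (1:ℝ)) x + 2 * M ^ 2 * s x ^ 2 + 8 * ω ^ 2) ∂ρ := by
    refine integral_mono_of_nonneg (Eventually.of_forall fun x => sq_nonneg _)
      ((i1.add i2).add (integrable_const _)) (Eventually.of_forall fun x => ?_)
    by_cases hx : T x ∈ bad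
    · have : x ∈ T ⁻¹' bad := hx
      simp only [Set.indicator_of_mem this]
      have h := defect_abs κ (T := T) (B := B) f hM x
      have h2 : (defect κ T B f x) ^ 2 ≤ (2 * M) ^ 2 := by
        rw [← sq_abs]
        exact pow_le_pow_left₀ (abs_nonneg _) h 2
      have h3 : 0 ≤ 2 * M ^ 2 * s x ^ 2 + 8 * ω ^ 2 := by positivity
      linarith
    · have : x ∉ T ⁻¹' bad := hx
      simp only [Set.indicator_of_notMem this]
      have := step_pt κ hBmeas hBdet hBnm hBnd hBn f hM hM0 hK hR hω0 hω j x (not_lt.1 hx)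
      simp only [hs]
      linarith
  rw [integral_add (f := fun x => 4 * M ^ 2 * (T ⁻¹' bad).indicator (fun _ => (1:ℝ)) x + 2 * M ^ 2 * s x ^ 2)
    (i1.add i2) (integrable_const _), integral_add i1 i2, integral_const_mul, integral_const_mul,
    integral_indicator_const _ hTbad, hTb] at key
  simp only [smul_eq_mul, mul_one, integral_const, probReal_univ, one_mul] at key
  refine key.trans ?_
  have hM2 : 0 ≤ 2 * M ^ 2 := by positivity
  have := mul_le_mul_of_nonneg_left E hM2
  linarith

lemma step_sum {T : X → X} (hT : Measurable T) (hTρ : ρ.map T = ρ) {B : X → Matrix (Fin d) (Fin d) ℝ}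
    (hBmeas : ∀ i j, Measurable fun x => B x i j) (hBdet : ∀ x, (B x).det = 1)
    (hinv : (ρ ⊗ₘ κ).map (fun p => (T p.1, projAct (B p.1) p.2)) = ρ ⊗ₘ κ)
    {Bn : ℕ → X → Matrix (Fin d) (Fin d) ℝ} (hBnm : ∀ n i j, Measurable fun x => Bn n x i j)
    (hBnd : ∀ n x, (Bn n x).det = 1) (hBn : ∀ n x, Bn (n + 1) x = Bn n (T x) * B x)
    (f : C(Metric.sphere (0 : EuclideanSpace ℝ (Fin d)) 1, ℝ)) {M : ℝ} (hM : ∀ v, |f v| ≤ M) (hM0 : 0 ≤ M)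
    {K : ℕ} (hK : 0 < K) {R ω : ℝ} (hR : 1 ≤ R) (hω0 : 0 ≤ ω)
    (hω : ∀ v w, dist v w ≤ distC d * R ^ (d + 1) * (d / (K : ℝ)) → |f v - f w| ≤ ω) (n : ℕ) :
    n * ∫ x, (defect κ T B f x) ^ 2 ∂ρ ≤
      4 * M ^ 2 * ∑ j ∈ Finset.range n, ρ.real {y | R < matOpNorm (Bn j y)} +
      16 * M ^ 2 * (2 * (d * Real.log (2 * K + 1)) + 2 * Real.log 2) + n * (8 * ω ^ 2) := by
  have h := Finset.sum_le_sum fun j (_ : j ∈ Finset.range n) =>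
    step_int ρ κ hT hTρ hBmeas hBdet hinv hBnm hBnd hBn f hM hM0 hK hR hω0 hω j
  rw [Finset.sum_add_distrib, Finset.sum_add_distrib, ← Finset.mul_sum, ← Finset.mul_sum,
    Finset.sum_range_sub'] at h
  simp only [Finset.sum_const, Finset.card_range, nsmul_eq_mul] at h
  have hcm : ∀ j, Measurable (cellJ Bn K j) := fun j => (measurable_cubeCell K).comp
    (measurable_projAct (fun i k => (hBnm j i k).comp measurable_fst) (fun p => hBnd j p.1) measurable_snd)
  have h1 := (cellH_bd ρ κ (hcm 0)).2
  have h2 := (cellH_bd ρ κ (hcm n)).1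
  have e : Real.log (Fintype.card (Fin d → Fin (2 * K + 1))) = d * Real.log (2 * K + 1) := by
    rw [Fintype.card_fun, Fintype.card_fin, Fintype.card_fin]
    push_cast
    rw [Real.log_pow]
  rw [e] at h1
  have hM2 : 0 ≤ 16 * M ^ 2 := by positivity
  have := mul_le_mul_of_nonneg_left (sub_le_sub h1 h2) hM2
  linarith

lemma bad_le {Bn : ℕ → X → Matrix (Fin d) (Fin d) ℝ} (hBnm : ∀ n i j, Measurable fun x => Bn n x i j)
    {η : ℝ} (hη : 0 < η) {j n : ℕ} (hjn : j < n) (hj0 : 0 < j)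
    (h : (∫⁻ x, ENNReal.ofReal (Real.log (matOpNorm (Bn j x))) ∂ρ) / (j : ℝ≥0∞) ≤ ENNReal.ofReal (η ^ 2)) :
    ρ.real {y | Real.exp (η * n) < matOpNorm (Bn j y)} ≤ η := by
  have hn0 : (0:ℝ) < n := by exact_mod_cast (hj0.trans hjn)
  rw [ENNReal.div_le_iff (by exact_mod_cast hj0.ne') (by simp)] at h
  have hm : Measurable fun x => ENNReal.ofReal (Real.log (matOpNorm (Bn j x))) :=
    (measurable_matOpNorm (hBnm j)).log.ennreal_ofReal
  have h1 := mul_meas_ge_le_lintegral (μ := ρ) hm (ENNReal.ofReal (η * n))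
  have h2 : {y | Real.exp (η * n) < matOpNorm (Bn j y)} ⊆
      {x | ENNReal.ofReal (η * n) ≤ ENNReal.ofReal (Real.log (matOpNorm (Bn j x)))} := by
    intro y hy
    apply ENNReal.ofReal_le_ofReal
    have hy' : Real.exp (η * n) < matOpNorm (Bn j y) := hy
    have := Real.log_le_log (Real.exp_pos _) hy'.le
    rwa [Real.log_exp] at this
  have h3 : ENNReal.ofReal (η * n) * ρ {y | Real.exp (η * n) < matOpNorm (Bn j y)} ≤
      ENNReal.ofReal (η ^ 2 * n) := by
    refine (mul_le_mul_right (measure_mono h2) _).trans (h1.trans (h.trans ?_))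
    rw [ENNReal.ofReal_mul (by positivity), ENNReal.ofReal_natCast]
    gcongr
  have h4 := ENNReal.toReal_mono ENNReal.ofReal_ne_top h3
  rw [ENNReal.toReal_mul, ENNReal.toReal_ofReal (by positivity), ENNReal.toReal_ofReal (by positivity)] at h4
  change η * n * ρ.real _ ≤ _ at h4
  have h5 : η * n * ρ.real {y | Real.exp (η * n) < matOpNorm (Bn j y)} ≤ η * n * η := by linarith
  exact le_of_mul_le_mul_left h5 (by positivity)

lemma defect_int_zero {T : X → X} (hT : Measurable T) (hTρ : ρ.map T = ρ) {B : X → Matrix (Fin d) (Fin d) ℝ}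
    (hBmeas : ∀ i j, Measurable fun x => B x i j) (hBdet : ∀ x, (B x).det = 1)
    (hinv : (ρ ⊗ₘ κ).map (fun p => (T p.1, projAct (B p.1) p.2)) = ρ ⊗ₘ κ)
    {Bn : ℕ → X → Matrix (Fin d) (Fin d) ℝ} (hBnm : ∀ n i j, Measurable fun x => Bn n x i j)
    (hBnd : ∀ n x, (Bn n x).det = 1) (hBn : ∀ n x, Bn (n + 1) x = Bn n (T x) * B x)
    (hlyap : Tendsto
      (fun n : ℕ => (∫⁻ x, ENNReal.ofReal (Real.log (matOpNorm (Bn n x))) ∂ρ) / (n : ℝ≥0∞))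
      atTop (nhds 0))
    (f : C(Metric.sphere (0 : EuclideanSpace ℝ (Fin d)) 1, ℝ)) :
    ∫ x, (defect κ T B f x) ^ 2 ∂ρ ≤ 0 := by
  set D := ∫ x, (defect κ T B f x) ^ 2 ∂ρ with hD
  obtain ⟨M, hM0, hM⟩ : ∃ M, 0 ≤ M ∧ ∀ v, |f v| ≤ M := ⟨‖f‖, norm_nonneg _, fun v => f.norm_coe_le_norm v⟩
  have claim : ∀ η : ℝ, 0 < η →
      D ≤ 4 * M ^ 2 * η + 16 * M ^ 2 * (2 * (d * ((d + 2) * η))) + 8 * η ^ 2 := by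
    intro η hη
    obtain ⟨J, hJ⟩ := eventually_atTop.1
      (hlyap.eventually_le_const (u := ENNReal.ofReal (η ^ 2)) (by simp; positivity))
    have huc := CompactSpace.uniformContinuous_of_continuous f.continuous
    obtain ⟨δ, hδ, hδf⟩ := Metric.uniformContinuous_iff.1 huc η hη
    have hexp : Tendsto (fun n : ℕ => distC d * d * Real.exp (-(η * n))) atTop (nhds 0) := by
      have h1 : Tendsto (fun n : ℕ => η * (n:ℝ)) atTop atTop :=
        tendsto_natCast_atTop_atTop.const_mul_atTop hη
      simpa using (Real.tendsto_exp_neg_atTop_nhds_zero.comp h1).const_mul (distC d * d)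
    have hev : ∀ᶠ n : ℕ in atTop, D ≤ (4 * M ^ 2 * η + 16 * M ^ 2 * (2 * (d * ((d + 2) * η))) + 8 * η ^ 2) +
        (4 * M ^ 2 * (J + 1) + 16 * M ^ 2 * (2 * (d * Real.log 5) + 2 * Real.log 2)) / n := by
      filter_upwards [hexp.eventually_lt_const hδ, eventually_gt_atTop 0] with n hn hn0
      have hn0' : (0:ℝ) < n := by exact_mod_cast hn0
      set K := ⌈Real.exp ((d + 2) * (η * n))⌉₊ with hKd
      have hex1 : 1 ≤ Real.exp ((d + 2) * (η * n)) := Real.one_le_exp (by positivity)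
      have hK : 0 < K := Nat.ceil_pos.2 (Real.exp_pos _)
      have hKge : Real.exp ((d + 2) * (η * n)) ≤ K := Nat.le_ceil _
      have hKle : (K : ℝ) ≤ Real.exp ((d + 2) * (η * n)) + 1 := (Nat.ceil_lt_add_one (Real.exp_pos _).le).le
      have hlogK : Real.log (2 * K + 1) ≤ Real.log 5 + (d + 2) * (η * n) := by
        rw [← Real.log_exp ((d + 2) * (η * n)), ← Real.log_mul (by norm_num) (Real.exp_pos _).ne']
        apply Real.log_le_log (by positivity)
        linarith
      have hC : 0 ≤ distC d := by unfold distC; positivity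
      have S := step_sum ρ κ hT hTρ hBmeas hBdet hinv hBnm hBnd hBn f hM hM0 hK
        (R := Real.exp (η * n)) (ω := η) (Real.one_le_exp (by positivity)) hη.le (by
          intro v w hvw
          have hlt : dist v w < δ := by
            refine lt_of_le_of_lt (hvw.trans ?_) hn
            have : Real.exp (η * n) ^ (d + 1) * (1 / (K:ℝ)) ≤ Real.exp (-(η * n)) := by
              rw [mul_one_div, div_le_iff₀ (by positivity)]
              calc Real.exp (η * n) ^ (d + 1) = Real.exp (-(η * n)) * Real.exp ((d + 2) * (η * n)) := by
                    rw [← Real.exp_nat_mul, ← Real.exp_add]; congr 1; push_cast; ring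
                _ ≤ _ := by gcongr
            calc distC d * Real.exp (η * n) ^ (d + 1) * (d / (K:ℝ)) =
                distC d * d * (Real.exp (η * n) ^ (d + 1) * (1 / (K:ℝ))) := by ring
              _ ≤ _ := by gcongr
          exact (hδf hlt).le) n
      have hbad : ∑ j ∈ Finset.range n, ρ.real {y | Real.exp (η * n) < matOpNorm (Bn j y)} ≤ (J + 1) + n * η := by
        calc _ ≤ ∑ j ∈ Finset.range n, ((if j < J + 1 then (1:ℝ) else 0) + η) := by
              refine Finset.sum_le_sum fun j hj => ?_
              split_ifs with hjJ
              · have : ρ.real {y | Real.exp (η * n) < matOpNorm (Bn j y)} ≤ 1 := measureReal_le_one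
                linarith
              · rw [zero_add]
                exact bad_le ρ hBnm hη (Finset.mem_range.1 hj) (by omega) (hJ j (by omega))
          _ ≤ _ := by
              rw [Finset.sum_add_distrib, Finset.sum_const, Finset.card_range, nsmul_eq_mul]
              gcongr
              rw [← Finset.sum_filter, Finset.sum_const, nsmul_eq_mul, mul_one]
              have : (Finset.filter (fun j => j < J + 1) (Finset.range n)).card ≤ J + 1 := by
                calc _ ≤ (Finset.range (J + 1)).card := Finset.card_le_card (by
                      intro j hj; simp at hj ⊢; omega)
                  _ = _ := Finset.card_range _
              exact_mod_cast this
      have hS2 : n * D ≤ 4 * M ^ 2 * ((J + 1) + n * η) +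
          16 * M ^ 2 * (2 * (d * (Real.log 5 + (d + 2) * (η * n))) + 2 * Real.log 2) + n * (8 * η ^ 2) := by
        refine S.trans ?_
        gcongr
      have e : (4 * M ^ 2 * η + 16 * M ^ 2 * (2 * (d * ((d + 2) * η))) + 8 * η ^ 2) +
        (4 * M ^ 2 * (J + 1) + 16 * M ^ 2 * (2 * (d * Real.log 5) + 2 * Real.log 2)) / n =
          (4 * M ^ 2 * ((J + 1) + n * η) +
          16 * M ^ 2 * (2 * (d * (Real.log 5 + (d + 2) * (η * n))) + 2 * Real.log 2) + n * (8 * η ^ 2)) / n := by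
        field_simp
        ring
      rw [e, le_div_iff₀ hn0', mul_comm]
      exact hS2
    have hlim : Tendsto (fun n : ℕ => (4 * M ^ 2 * η + 16 * M ^ 2 * (2 * (d * ((d + 2) * η))) + 8 * η ^ 2) +
        (4 * M ^ 2 * (J + 1) + 16 * M ^ 2 * (2 * (d * Real.log 5) + 2 * Real.log 2)) / (n:ℝ)) atTop
        (nhds (4 * M ^ 2 * η + 16 * M ^ 2 * (2 * (d * ((d + 2) * η))) + 8 * η ^ 2)) := by
      have h := (tendsto_const_div_atTop_nhds_zero_nat
        (4 * M ^ 2 * (J + 1) + 16 * M ^ 2 * (2 * (d * Real.log 5) + 2 * Real.log 2))).const_add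
        (4 * M ^ 2 * η + 16 * M ^ 2 * (2 * (d * ((d + 2) * η))) + 8 * η ^ 2)
      rw [add_zero] at h
      exact h
    exact ge_of_tendsto hlim hev
  have hl : Tendsto (fun η : ℝ => 4 * M ^ 2 * η + 16 * M ^ 2 * (2 * (d * ((d + 2) * η))) + 8 * η ^ 2)
      (nhdsWithin 0 (Set.Ioi 0)) (nhds 0) := by
    have : Continuous (fun η : ℝ => 4 * M ^ 2 * η + 16 * M ^ 2 * (2 * (d * ((d + 2) * η))) + 8 * η ^ 2) := by
      fun_prop
    simpa using (this.tendsto 0).mono_left nhdsWithin_le_nhds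
  exact ge_of_tendsto hl (eventually_nhdsWithin_of_forall fun η hη => claim η hη)

lemma defect_ae_zero {T : X → X} (hT : Measurable T) {B : X → Matrix (Fin d) (Fin d) ℝ}
    (hBmeas : ∀ i j, Measurable fun x => B x i j) (hBdet : ∀ x, (B x).det = 1)
    (f : C(Metric.sphere (0 : EuclideanSpace ℝ (Fin d)) 1, ℝ))
    (h : ∫ x, (defect κ T B f x) ^ 2 ∂ρ ≤ 0) : ∀ᵐ x ∂ρ, defect κ T B f x = 0 := by
  have hb : Measurable (fun p : X × Metric.sphere (0 : EuclideanSpace ℝ (Fin d)) 1 => projAct (B p.1) p.2) :=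
    measurable_projAct (fun i j => (hBmeas i j).comp measurable_fst) (fun p => hBdet p.1) measurable_snd
  have m1 : Measurable fun x => ∫ v, f (projAct (B x) v) ∂(κ x) :=
    (StronglyMeasurable.integral_kernel_prod_right' (κ := κ)
      (f := fun p => f (projAct (B p.1) p.2)) (f.continuous.measurable.comp hb).stronglyMeasurable).measurable
  have m2 : Measurable fun x => ∫ v, f v ∂(κ x) :=
    (StronglyMeasurable.integral_kernel_prod_right' (κ := κ)
      (f := fun p => f p.2) (f.continuous.measurable.comp measurable_snd).stronglyMeasurable).measurable
  have hm : Measurable (defect κ T B f) := m1.sub (m2.comp hT)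
  have hi : Integrable (fun x => (defect κ T B f x) ^ 2) ρ := by
    refine integrable_bdd (hm.pow_const 2) ((2 * ‖f‖) ^ 2) fun x => ?_
    rw [abs_pow]
    exact pow_le_pow_left₀ (abs_nonneg _) (defect_abs κ f (fun v => f.norm_coe_le_norm v) x) 2
  have h0 : ∫ x, (defect κ T B f x) ^ 2 ∂ρ = 0 := le_antisymm h (integral_nonneg fun x => sq_nonneg _)
  have := (integral_eq_zero_iff_of_nonneg (fun x => sq_nonneg _) hi).1 h0
  filter_upwards [this] with x hx
  simpa using hx

end mainproof


end helpers

/-- **Ledrappier's invariance criterion (Furstenberg's criterion).**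
Let `T` preserve the probability measure `ρ` on a standard Borel space `X` and let
`B : X → SL(d,ℝ)` be measurable, inducing the extended dynamics
`T̂(x,v) = (Tx, B(x)v/|B(x)v|)` on `X × S^{d-1}`.  If `γ : X → 𝒫(S^{d-1})` is a measurable
family with `γ_x(dv) ρ(dx)` invariant under `T̂`, and the top Lyapunov exponent
`λ⁺ = lim (1/n) ∫ log‖B(T^{n-1}x) ⋯ B(x)‖ dρ` exists and equals `0`, then
`B(x)_* γ_x = γ_{Tx}` for `ρ`-almost every `x`. -/
theorem ledrappier_invariance_criterion
    {X : Type} [MeasurableSpace X] [StandardBorelSpace X]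
    (ρ : Measure X) [IsProbabilityMeasure ρ]
    (T : X → X) (hT : Measurable T) (hTρ : ρ.map T = ρ)
    (d : ℕ) (hd : 1 ≤ d)
    (B : X → Matrix (Fin d) (Fin d) ℝ) (hBmeas : ∀ i j, Measurable fun x => B x i j)
    (hBdet : ∀ x, (B x).det = 1)
    (γ : X → Measure (Metric.sphere (0 : EuclideanSpace ℝ (Fin d)) 1))
    (hγprob : ∀ x, IsProbabilityMeasure (γ x))
    (hγmeas : ∀ E, MeasurableSet E → Measurable fun x => γ x E)
    (hinv :
      Measure.map
        (fun p : X × Metric.sphere (0 : EuclideanSpace ℝ (Fin d)) 1 =>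
          (T p.1, projAct (B p.1) p.2))
        (ρ.bind fun x => (γ x).map fun v => (x, v)) =
      ρ.bind fun x => (γ x).map fun v => (x, v))
    (Bn : ℕ → X → Matrix (Fin d) (Fin d) ℝ)
    (hBn0 : ∀ x, Bn 0 x = 1)
    (hBns : ∀ n x, Bn (n + 1) x = B (T^[n] x) * Bn n x)
    (hlyap : Tendsto
      (fun n : ℕ => (∫⁻ x, ENNReal.ofReal (Real.log (matOpNorm (Bn n x))) ∂ρ) / (n : ℝ≥0∞))
      atTop (nhds 0)) :
    ∀ᵐ x ∂ρ, (γ x).map (projAct (B x)) = γ (T x) := by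
  classical
  have hγm : Measurable γ := Measure.measurable_of_measurable_coe _ hγmeas
  let κ : ProbabilityTheory.Kernel X (Metric.sphere (0 : EuclideanSpace ℝ (Fin d)) 1) := ⟨γ, hγm⟩
  have hκ : ProbabilityTheory.IsMarkovKernel κ := ⟨hγprob⟩
  have hbind : (ρ.bind fun x => (γ x).map fun v => (x, v)) = ρ.compProd κ := by
    have hmk : Measurable fun x => (γ x).map fun v => (x, v) := by
      refine Measure.measurable_of_measurable_coe _ fun s hs => ?_
      have : (fun x => ((γ x).map fun v => (x, v)) s) = fun x => κ x (Prod.mk x ⁻¹' s) := by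
        ext x
        rw [Measure.map_apply measurable_prodMk_left hs]; rfl
      rw [this]
      exact ProbabilityTheory.Kernel.measurable_kernel_prodMk_left hs
    ext s hs
    rw [Measure.bind_apply hs hmk.aemeasurable, Measure.compProd_apply hs]
    refine lintegral_congr fun x => ?_
    rw [Measure.map_apply measurable_prodMk_left hs]; rfl
  rw [hbind] at hinv
  have hBn : ∀ n x, Bn (n + 1) x = Bn n (T x) * B x := by
    intro n
    induction n with
    | zero => intro x; rw [hBns, hBn0, hBn0]; simp
    | succ n ih =>
      intro x
      rw [hBns, ih, hBns n (T x), Matrix.mul_assoc]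
      simp [Function.iterate_succ_apply]
  have hBnd : ∀ n x, (Bn n x).det = 1 := by
    intro n
    induction n with
    | zero => intro x; rw [hBn0, Matrix.det_one]
    | succ n ih => intro x; rw [hBns, Matrix.det_mul, ih, hBdet, one_mul]
  have hBnm : ∀ n i j, Measurable fun x => Bn n x i j := by
    intro n
    induction n with
    | zero => intro i j; simp only [hBn0]; exact measurable_const
    | succ n ih =>
      intro i j
      simp only [hBns, Matrix.mul_apply]
      exact Finset.measurable_sum _ fun k _ => ((hBmeas i k).comp (hT.iterate n)).mul (ih k j)
  obtain ⟨F, hFc, hFd⟩ := TopologicalSpace.exists_countable_dense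
    C(Metric.sphere (0 : EuclideanSpace ℝ (Fin d)) 1, ℝ)
  have hae : ∀ᵐ x ∂ρ, ∀ f ∈ F, defect κ T B f x = 0 := by
    rw [ae_ball_iff hFc]
    intro f _
    exact defect_ae_zero ρ κ hT hBmeas hBdet f
      (defect_int_zero ρ κ hT hTρ hBmeas hBdet hinv hBnm hBnd hBn hlyap f)
  filter_upwards [hae] with x hx
  have hb : Measurable (projAct (B x)) :=
    measurable_projAct (B := fun _ : Metric.sphere (0 : EuclideanSpace ℝ (Fin d)) 1 => B x)
      (fun i j => measurable_const) (fun _ => hBdet x) measurable_id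
  have := hγprob x
  have := hγprob (T x)
  have := Measure.isProbabilityMeasure_map (μ := γ x) hb.aemeasurable
  have hcont : ∀ (m : Measure (Metric.sphere (0 : EuclideanSpace ℝ (Fin d)) 1)) [IsProbabilityMeasure m],
      Continuous fun f : C(Metric.sphere (0 : EuclideanSpace ℝ (Fin d)) 1, ℝ) => ∫ v, f v ∂m := by
    intro m _
    refine Metric.continuous_iff.2 fun f ε hε => ⟨ε, hε, fun g hg => ?_⟩
    have ii : ∀ f : C(Metric.sphere (0 : EuclideanSpace ℝ (Fin d)) 1, ℝ), Integrable (fun v => f v) m := fun f =>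
      integrable_bdd f.continuous.measurable ‖f‖ fun v => f.norm_coe_le_norm v
    rw [Real.dist_eq, ← integral_sub (ii g) (ii f)]
    refine lt_of_le_of_lt ?_ hg
    have := norm_integral_le_of_norm_le_const (μ := m) (f := fun v => g v - f v) (C := dist g f)
      (Eventually.of_forall fun v => by
        rw [← dist_eq_norm]
        exact ContinuousMap.dist_apply_le_dist v)
    simpa using this
  have hall : ∀ f : C(Metric.sphere (0 : EuclideanSpace ℝ (Fin d)) 1, ℝ),
      ∫ v, f v ∂((γ x).map (projAct (B x))) = ∫ v, f v ∂(γ (T x)) := by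
    intro f
    refine congrFun ((hcont _).ext_on hFd (hcont _) fun f hf => ?_) f
    have h := hx f hf
    simp only [defect] at h
    change ∫ v, f v ∂((γ x).map (projAct (B x))) = ∫ v, f v ∂(γ (T x))
    rw [integral_map hb.aemeasurable f.continuous.measurable.aestronglyMeasurable]
    exact sub_eq_zero.1 h
  exact ext_of_forall_integral_eq_of_IsFiniteMeasure fun f => hall f.toContinuousMap
end
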